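/- Let G be a countably infinite discrete amenable group, X an infinite compact metrizable space, and α: G ↷ X a minimal free continuous action such that E_G(X) is compact and zero-dimensional in the weak* topology. If α has dynamical m-comparison for some m ∈ ℕ, then α is almost finite. -/

import Mathlib

open MeasureTheory Set Pointwise

variable (G X : Type*)

section Defs

variable [Group G] [MetricSpace X] [MeasurableSpace X] [MulAction G X]

/-- A Borel probability measure is `G`-invariant. -/
def InvariantMeasure (μ : ProbabilityMeasure X) : Prop :=
  ∀ g : G, MeasureTheory.Measure.map (fun x => g • x) (μ : Measure X) = (μ : Measure X)

/-- `M_G(X)`: the set of `G`-invariant Borel probability measures on `X`. -/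
def MG : Set (ProbabilityMeasure X) := {μ | InvariantMeasure G X μ}

/-- `E_G(X)`: the set of ergodic `G`-invariant Borel probability measures on `X`,
i.e. invariant measures giving every `G`-invariant Borel set measure `0` or `1`. -/
def EG : Set (ProbabilityMeasure X) :=
  {μ | InvariantMeasure G X μ ∧
    ∀ A : Set X, MeasurableSet A → (∀ g : G, g • A = A) → μ A = 0 ∨ μ A = 1}

/-- The action of `G` on `X` is free. -/
def FreeAction : Prop := ∀ (g : G) (x : X), g • x = x → g = 1

/-- The action of `G` on `X` is minimal: there is no proper nonempty closed invariant subset. -/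
def MinimalAction : Prop :=
  ∀ C : Set X, IsClosed C → (∀ g : G, g • C ⊆ C) → C = ∅ ∨ C = Set.univ

/-- The small boundary property. -/
def SmallBoundaryProperty : Prop :=
  ∀ (x : X) (U : Set X), IsOpen U → x ∈ U →
    ∃ V : Set X, IsOpen V ∧ x ∈ V ∧ V ⊆ U ∧ ∀ μ ∈ MG G X, μ (frontier V) = 0

/-- `S` is a `(K,δ)`-invariant finite subset of `G`. -/
def FolnerInv (K : Finset G) (δ : ℝ) (S : Finset G) : Prop :=
  (1 - δ) * (S.card : ℝ) ≤ ({s | s ∈ S ∧ ∀ k ∈ K, k * s ∈ S} : Set G).ncard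

/-- `G` is amenable: it admits `(K,δ)`-invariant nonempty finite subsets for all `K, δ`. -/
def AmenableGroup : Prop :=
  ∀ (K : Finset G) (δ : ℝ), 0 < δ → ∃ S : Finset G, S.Nonempty ∧ FolnerInv G K δ S

/-- `(S, V)` is a tower: the translates `s • V`, `s ∈ S`, are pairwise disjoint. -/
def IsTower (S : Finset G) (V : Set X) : Prop :=
  (S : Set G).Pairwise fun s t => Disjoint (s • V) (t • V)

/-- `F ≺_m O`: subordination with `m`-colored multiplicity. -/
def SubordinateM (m : ℕ) (F O : Set X) : Prop :=
  ∃ (n : ℕ) (U : Fin n → Set X) (s : Fin n → G) (c : Fin n → Fin (m + 1)),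
    (∀ k, IsOpen (U k)) ∧ F ⊆ ⋃ k, U k ∧ (∀ k, s k • U k ⊆ O) ∧
    ∀ k l, k ≠ l → c k = c l → Disjoint (s k • U k) (s l • U l)

/-- The action has dynamical `m`-comparison. -/
def HasMComparison (m : ℕ) : Prop :=
  ∀ F O : Set X, IsClosed F → IsOpen O →
    (∀ μ ∈ MG G X, μ F < μ O) → SubordinateM G X m F O

/-- The action is `m`-almost finite. -/
def MAlmostFinite (m : ℕ) : Prop :=
  ∀ (n : ℕ), 1 ≤ n → ∀ (K : Finset G) (δ : ℝ), 0 < δ →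
    ∃ (I : ℕ) (S : Fin I → Finset G) (V : Fin I → Set X) (c : Fin I → Fin (m + 1))
      (S' : Fin I → Finset G),
      (∀ i, IsOpen (V i)) ∧
      (∀ i, IsTower G X (S i) (closure (V i))) ∧
      (∀ i, FolnerInv G K δ (S i)) ∧
      (∀ i, ∀ s ∈ S i, Metric.diam (s • closure (V i)) < δ) ∧
      (∀ i j, i ≠ j → c i = c j →
        Disjoint ((S i : Set G) • closure (V i)) ((S j : Set G) • closure (V j))) ∧
      (∀ i, S' i ⊆ S i) ∧ (∀ i, ((S' i).card : ℝ) ≤ (S i).card / n) ∧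
      SubordinateM G X 0 (Set.univ \ ⋃ i, (S i : Set G) • V i) (⋃ i, (S' i : Set G) • V i)

end Defs

/-!
Every ergodic measure admits an open castle with Følner shapes whose levels cover all but a small
proportion of it: this is the Ornstein–Weiss quasitiling argument, run with small open sets on
which the action is free. On measures near the given one the same castle still works, so
compactness and zero-dimensionality of `E_G(X)` give finitely many castles and a clopen partition
of `E_G(X)` such that the `j`-th castle is good for the measures in the `j`-th part.

To glue them, choose a continuous `f : X → ℝ` with `∫ f dμ ≈ j` for `μ` in the `j`-th part: as the
extreme points of `M_G(X)` form a closed set, every continuous function on `E_G(X)` is approximated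
by functions `μ ↦ ∫ f dμ`. By the mean ergodic theorem, made uniform over `E_G(X)`, the Følner
averages `F` of `f` are close to `j` off a set which is small for all measures in the `j`-th part.
Cutting the `j`-th castle down to the places where `F` is close to `j` makes the castles disjoint,
and their union covers almost everything for every ergodic, hence for every invariant, measure.

Finally, `m`-comparison subordinates the remainder, in `m + 1` colours, to a small part of the
castle. Moving each colour to its own disjoint copy of that part inside the same towers turns this
into a subordination in a single colour.
-/

universe u

/-! ### Følner sets -/

section Folner

variable {G : Type u} [Group G] {K K' S T : Finset G} {δ δ' ε : ℝ}

open Classical in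
/-- The `K`-core of `S`, i.e. the points of `S` which `K` does not move out of `S`. Invariance of
`S` in the sense of `FolnerInv` says that this core is large. -/
noncomputable def leftCore (K S : Finset G) : Finset G := S.filter fun s => ∀ k ∈ K, k * s ∈ S

theorem mem_leftCore {s : G} : s ∈ leftCore K S ↔ s ∈ S ∧ ∀ k ∈ K, k * s ∈ S := by
  simp only [leftCore, Finset.mem_filter]

theorem leftCore_subset : leftCore K S ⊆ S := fun _ hs => (mem_leftCore.1 hs).1

theorem folnerInv_iff_card_leftCore :
    FolnerInv G K δ S ↔ (1 - δ) * (S.card : ℝ) ≤ ((leftCore K S).card : ℝ) := by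
  have hcore : ({s | s ∈ S ∧ ∀ k ∈ K, k * s ∈ S} : Set G) = leftCore K S := by
    ext s
    simp only [mem_ofPred_eq, SetLike.mem_coe, mem_leftCore]
  rw [FolnerInv, hcore, Set.ncard_coe_finset]

theorem FolnerInv.mono (h : FolnerInv G K' δ' S) (hK : K ⊆ K') (hδ : δ' ≤ δ) :
    FolnerInv G K δ S := by
  rw [folnerInv_iff_card_leftCore] at h ⊢
  have hsub : leftCore K' S ⊆ leftCore K S := fun s hs =>
    mem_leftCore.2 ⟨leftCore_subset hs, fun k hk => (mem_leftCore.1 hs).2 k (hK hk)⟩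
  calc (1 - δ) * (S.card : ℝ) ≤ (1 - δ') * S.card := by gcongr
    _ ≤ (leftCore K' S).card := h
    _ ≤ (leftCore K S).card := by gcongr

theorem FolnerInv.card_le_card (h : FolnerInv G K δ S) (hδ : δ < 1) (hS : S.Nonempty) :
    K.card ≤ S.card := by
  rw [folnerInv_iff_card_leftCore] at h
  have hS0 : (0 : ℝ) < S.card := mod_cast hS.card_pos
  have hcore : (0 : ℝ) < (leftCore K S).card := (mul_pos (by linarith) hS0).trans_le h
  obtain ⟨s, hs⟩ := Finset.card_pos.1 (mod_cast hcore)
  exact Finset.card_le_card_of_injOn (· * s) (mem_leftCore.1 hs).2 (mul_left_injective s).injOn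

theorem FolnerInv.card_sdiff_leftCore_le (h : FolnerInv G K δ S) [DecidableEq G] :
    ((S \ leftCore K S).card : ℝ) ≤ δ * S.card := by
  rw [folnerInv_iff_card_leftCore] at h
  rw [Finset.cast_card_sdiff leftCore_subset]
  linarith

theorem FolnerInv.card_mul_sdiff_le [DecidableEq G] (h : FolnerInv G K δ S) :
    (((K * S) \ S).card : ℝ) ≤ K.card * (δ * S.card) := by
  have hsub : (K * S) \ S ⊆ K * (S \ leftCore K S) := by
    intro g hg
    obtain ⟨hgK, hgS⟩ := Finset.mem_sdiff.1 hg
    obtain ⟨k, hk, s, hs, rfl⟩ := Finset.mem_mul.1 hgK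
    exact Finset.mul_mem_mul hk
      (Finset.mem_sdiff.2 ⟨hs, fun hcore => hgS ((mem_leftCore.1 hcore).2 k hk)⟩)
  calc (((K * S) \ S).card : ℝ) ≤ (K * (S \ leftCore K S)).card := by gcongr
    _ ≤ K.card * (S \ leftCore K S).card := mod_cast Finset.card_mul_le
    _ ≤ K.card * (δ * S.card) := by gcongr; exact h.card_sdiff_leftCore_le

theorem card_leftCore_le_of_subset [DecidableEq G] (K S T : Finset G) :
    (leftCore K T).card ≤ (leftCore K S).card + (1 + K.card) * (T \ S).card := by
  have hsub : leftCore K T ⊆ leftCore K S ∪ ((T \ S) ∪ K⁻¹ * (T \ S)) := by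
    intro s hs
    obtain ⟨hsT, hKs⟩ := mem_leftCore.1 hs
    by_contra! hout
    simp only [Finset.mem_union, not_or, mem_leftCore, Finset.mem_sdiff, not_and,
      not_not, not_forall] at hout
    obtain ⟨hcore, hsS, hsK⟩ := hout
    obtain ⟨k, hk, hks⟩ := hcore (hsS hsT)
    exact hsK (Finset.mem_mul.2 ⟨k⁻¹, Finset.inv_mem_inv hk, k * s,
      Finset.mem_sdiff.2 ⟨hKs k hk, hks⟩, inv_mul_cancel_left k s⟩)
  calc (leftCore K T).card
      ≤ (leftCore K S).card + ((T \ S).card + (K⁻¹ * (T \ S)).card) :=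
        (Finset.card_le_card hsub).trans <|
          (Finset.card_union_le _ _).trans <| by gcongr; exact Finset.card_union_le _ _
    _ ≤ (leftCore K S).card + ((T \ S).card + K⁻¹.card * (T \ S).card) := by
        gcongr; exact Finset.card_mul_le
    _ = (leftCore K S).card + (1 + K.card) * (T \ S).card := by rw [Finset.card_inv]; ring

theorem FolnerInv.of_subset (h : FolnerInv G K δ T) (hST : S ⊆ T)
    (hcard : (1 - ε) * (T.card : ℝ) ≤ S.card) (hδ : δ + (1 + K.card) * ε ≤ δ') (hδ' : δ' ≤ 1) :
    FolnerInv G K δ' S := by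
  classical
  rw [folnerInv_iff_card_leftCore] at h ⊢
  have hdiff : ((T \ S).card : ℝ) ≤ ε * T.card := by
    rw [Finset.cast_card_sdiff hST]; linarith
  have hcore : ((leftCore K T).card : ℝ) ≤
      (leftCore K S).card + (1 + K.card) * (T \ S).card :=
    mod_cast card_leftCore_le_of_subset K S T
  have hloss : (1 + K.card : ℝ) * (T \ S).card ≤ (1 + K.card) * (ε * T.card) := by gcongr
  calc (1 - δ') * (S.card : ℝ) ≤ (1 - δ') * T.card := by
        gcongr
    _ ≤ (1 - (δ + (1 + K.card) * ε)) * T.card := by gcongr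
    _ = (1 - δ) * T.card - (1 + K.card) * (ε * T.card) := by ring
    _ ≤ (leftCore K S).card := by linarith

end Folner

/-! ### Castles -/

section Castle

variable {G : Type u} {X ι κ : Type*} [Group G] [MulAction G X]
  {S : ι → Finset G} {V W : ι → Set X} {S' : κ → Finset G} {V' : κ → Set X}

/-- The towers `(S i, V i)` form a castle: all the levels `s • V i`, `s ∈ S i`, are pairwise
disjoint. This is phrased in terms of points, so that no distinction is needed between levels of
the same tower and levels of different towers. -/
def IsCastle (S : ι → Finset G) (V : ι → Set X) : Prop :=
  ∀ i j, ∀ s ∈ S i, ∀ t ∈ S j, ∀ x ∈ V i, ∀ y ∈ V j, s • x = t • y → i = j ∧ s = t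

/-- The part of the space covered by the levels of the towers `(S i, V i)`. -/
def footprint (S : ι → Finset G) (V : ι → Set X) : Set X := ⋃ i, (S i : Set G) • V i

theorem coe_smul_set_eq_biUnion (T : Finset G) (A : Set X) : (T : Set G) • A = ⋃ s ∈ T, s • A :=
  (iUnion_smul_set (T : Set G) A).symm

theorem mem_footprint {x : X} : x ∈ footprint S V ↔ ∃ i, ∃ s ∈ S i, ∃ v ∈ V i, s • v = x := by
  simp only [footprint, mem_iUnion, mem_smul, SetLike.mem_coe]

theorem smul_mem_footprint {i : ι} {s : G} {v : X} (hs : s ∈ S i) (hv : v ∈ V i) :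
    s • v ∈ footprint S V :=
  mem_footprint.2 ⟨i, s, hs, v, hv, rfl⟩

theorem footprint_mono (h : ∀ i, V i ⊆ W i) : footprint S V ⊆ footprint S W :=
  iUnion_mono fun i => smul_subset_smul_left (h i)

theorem isOpen_footprint [TopologicalSpace X] [ContinuousConstSMul G X] (hV : ∀ i, IsOpen (V i)) :
    IsOpen (footprint S V) :=
  isOpen_iUnion fun i => (hV i).smul_left

theorem measurableSet_footprint [MeasurableSpace X] [MeasurableConstSMul G X] [Countable ι]
    (hV : ∀ i, MeasurableSet (V i)) : MeasurableSet (footprint S V) := by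
  refine MeasurableSet.iUnion fun i => ?_
  rw [coe_smul_set_eq_biUnion]
  exact Finset.measurableSet_biUnion _ fun s _ => (hV i).const_smul s

theorem footprint_sumElim :
    footprint (Sum.elim S S') (Sum.elim V V') = footprint S V ∪ footprint S' V' := by
  simp only [footprint, iUnion_sum, Sum.elim_inl, Sum.elim_inr]

theorem footprint_comp_surjective {e : κ → ι} (he : Function.Surjective e) :
    footprint (S ∘ e) (V ∘ e) = footprint S V :=
  he.iUnion_comp fun i => (S i : Set G) • V i

theorem IsCastle.mono (h : IsCastle S W) (hVW : ∀ i, V i ⊆ W i) : IsCastle S V :=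
  fun i j s hs t ht x hx y hy => h i j s hs t ht x (hVW i hx) y (hVW j hy)

theorem IsCastle.sumElim (h : IsCastle S V) (h' : IsCastle S' V')
    (hdisj : Disjoint (footprint S V) (footprint S' V')) :
    IsCastle (Sum.elim S S') (Sum.elim V V') := by
  rintro (i | i) (j | j) s hs t ht x hx y hy hxy
  · exact (h i j s hs t ht x hx y hy hxy).imp_left (congrArg Sum.inl)
  · exact absurd hxy
      (hdisj.ne_of_mem (smul_mem_footprint hs hx) (smul_mem_footprint ht hy))
  · exact absurd hxy.symm
      (hdisj.ne_of_mem (smul_mem_footprint ht hy) (smul_mem_footprint hs hx))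
  · exact (h' i j s hs t ht x hx y hy hxy).imp_left (congrArg Sum.inr)

theorem IsCastle.disjoint_levels (h : IsCastle S V) {i j : ι} {s t : G} (hs : s ∈ S i)
    (ht : t ∈ S j) (hne : ¬(i = j ∧ s = t)) : Disjoint (s • V i) (t • V j) := by
  rw [disjoint_left]
  rintro _ ⟨x, hx, rfl⟩ ⟨y, hy, hxy⟩
  exact hne (h i j s hs t ht x hx y hy hxy.symm)

theorem IsCastle.disjoint_towers (h : IsCastle S V) {i j : ι} (hij : i ≠ j) :
    Disjoint ((S i : Set G) • V i) ((S j : Set G) • V j) := by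
  simp only [coe_smul_set_eq_biUnion, disjoint_iUnion_left, disjoint_iUnion_right]
  exact fun s hs t ht => h.disjoint_levels ht hs fun h => hij h.1

section Measure

variable [MeasurableSpace X] {μ : Measure X} [SMulInvariantMeasure G X μ]

variable (μ) in
theorem measureReal_smul_set (g : G) (A : Set X) :
    μ.real (g • A) = μ.real A := by
  rw [measureReal_def, measure_smul, measureReal_def]

theorem measureReal_biUnion_smul_le (T : Finset ι) (g : ι → G) (A : Set X) :
    μ.real (⋃ t ∈ T, g t • A) ≤ T.card * μ.real A := by
  calc μ.real (⋃ t ∈ T, g t • A) ≤ ∑ t ∈ T, μ.real (g t • A) := measureReal_biUnion_finset_le T _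
    _ = T.card * μ.real A := by
      simp only [measureReal_smul_set, Finset.sum_const, nsmul_eq_mul]

theorem IsCastle.measureReal_iUnion_smul [MeasurableConstSMul G X] [IsFiniteMeasure μ] [Fintype κ]
    (h : IsCastle S V) (hV : ∀ i, MeasurableSet (V i)) {i : κ → ι} {s : κ → G}
    (hs : ∀ k, s k ∈ S (i k)) (hinj : Function.Injective fun k => (i k, s k)) :
    μ.real (⋃ k, s k • V (i k)) = ∑ k, μ.real (V (i k)) := by
  rw [measureReal_iUnion_fintype (f := fun k => s k • V (i k)) (fun k l hkl => h.disjoint_levels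
    (hs k) (hs l) fun he => hkl (hinj (Prod.ext he.1 he.2))) fun k => (hV _).const_smul _]
  simp only [measureReal_smul_set]

theorem IsCastle.measureReal_footprint [MeasurableConstSMul G X] [IsFiniteMeasure μ] [Fintype ι]
    (h : IsCastle S V) (hV : ∀ i, MeasurableSet (V i)) :
    μ.real (footprint S V) = ∑ i, (S i).card * μ.real (V i) := by
  have hlevels : footprint S V = ⋃ k : Σ i, S i, (k.2 : G) • V k.1 := by
    simp only [footprint, coe_smul_set_eq_biUnion, iUnion_sigma, iUnion_subtype]
  have hinj : Function.Injective fun k : Σ i, S i => (k.1, (k.2 : G)) := by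
    rintro ⟨i, s⟩ ⟨j, t⟩ hst
    obtain ⟨hij, hst⟩ : i = j ∧ (s : G) = t := Prod.mk.inj hst
    subst hij
    rw [Subtype.ext hst]
  rw [hlevels, h.measureReal_iUnion_smul hV (fun k => k.2.2) hinj, Fintype.sum_sigma]
  simp only [Finset.sum_const, Finset.card_univ, Fintype.card_coe, nsmul_eq_mul]

end Measure

end Castle

/-! ### Quasi-tilings -/

section Visits

variable {G : Type u} {X : Type*} [Group G] [MulAction G X] {F T : Finset G} {A B : Set X} {x : X}

open Classical in
/-- The elements of `F` which move `x` into `A`. -/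
noncomputable def visits (F : Finset G) (A : Set X) (x : X) : Finset G :=
  F.filter fun f => f • x ∈ A

theorem mem_visits {f : G} : f ∈ visits F A x ↔ f ∈ F ∧ f • x ∈ A := by
  simp only [visits, Finset.mem_filter]

theorem visits_subset : visits F A x ⊆ F := fun _ hf => (mem_visits.1 hf).1

theorem visits_mono (h : A ⊆ B) : visits F A x ⊆ visits F B x :=
  fun _ hf => mem_visits.2 ((mem_visits.1 hf).imp_right (h ·))

theorem card_visits_add_card_visits_compl (F : Finset G) (A : Set X) (x : X) :
    (visits F A x).card + (visits F Aᶜ x).card = F.card := by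
  classical
  simp only [visits, mem_compl_iff]
  exact Finset.card_filter_add_card_filter_not _

theorem visits_eq_iff : visits F A x = T ↔ T ⊆ F ∧ ∀ f ∈ F, f • x ∈ A ↔ f ∈ T := by
  constructor
  · rintro rfl
    exact ⟨visits_subset, fun f hf => by simp only [mem_visits, hf, true_and]⟩
  · rintro ⟨hTF, hT⟩
    ext f
    rw [mem_visits]
    exact ⟨fun hf => (hT f hf.1).1 hf.2, fun hf => ⟨hTF hf, (hT f (hTF hf)).2 hf⟩⟩

variable [MeasurableSpace X] [MeasurableConstSMul G X]

theorem measurableSet_setOf_visits_eq (hA : MeasurableSet A) :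
    MeasurableSet {x | visits F A x = T} := by
  have hset : {x | visits F A x = T} = {_x | T ⊆ F} ∩ ⋂ f ∈ F, {x | f • x ∈ A ↔ f ∈ T} := by
    ext x
    simp only [visits_eq_iff, mem_ofPred_eq, mem_inter_iff, mem_iInter]
  rw [hset]
  exact (MeasurableSet.const _).inter <| Finset.measurableSet_biInter _ fun f _ =>
    (measurableSet_setOfPred.1 (measurable_const_smul f hA)).iff measurable_const |>.setOf

theorem mul_measureReal_le_of_le_card_visits {μ : Measure X} [IsFiniteMeasure μ]
    [SMulInvariantMeasure G X μ] {c : ℝ} (hA : MeasurableSet A) (hB : MeasurableSet B)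
    (h : ∀ x ∈ A, c ≤ (visits F B x).card) : c * μ.real A ≤ F.card * μ.real B := by
  have hpre (f : G) : MeasurableSet ((f • · : X → X) ⁻¹' B) := measurable_const_smul f hB
  have hcard (x : X) : ((visits F B x).card : ℝ) =
      ∑ f ∈ F, ((f • · : X → X) ⁻¹' B).indicator (fun _ => (1 : ℝ)) x := by
    classical
    simp only [visits, Finset.card_filter, Nat.cast_sum, Nat.cast_ite, Nat.cast_one, Nat.cast_zero,
      indicator_apply, mem_preimage]
  have hint : ∀ f ∈ F, Integrable (((f • · : X → X) ⁻¹' B).indicator fun _ => (1 : ℝ)) μ :=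
    fun f _ => (integrable_const 1).indicator (hpre f)
  calc c * μ.real A = ∫ x, A.indicator (fun _ => c) x ∂μ := by
        rw [integral_indicator_const c hA, smul_eq_mul, mul_comm]
    _ ≤ ∫ x, ∑ f ∈ F, ((f • · : X → X) ⁻¹' B).indicator (fun _ => (1 : ℝ)) x ∂μ := by
        refine integral_mono ((integrable_const c).indicator hA) (integrable_finsetSum F hint) ?_
        simp only [← hcard]
        exact indicator_le' h fun x _ => Nat.cast_nonneg _
    _ = ∑ _f ∈ F, μ.real B := by
        rw [integral_finsetSum F hint]
        refine Finset.sum_congr rfl fun f _ => ?_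
        rw [integral_indicator_const _ (hpre f), smul_eq_mul, mul_one, measureReal_def,
          measure_preimage_smul, measureReal_def]
    _ = F.card * μ.real B := by rw [Finset.sum_const, nsmul_eq_mul]

end Visits

section LargeSubsets

variable {G : Type u} {ε : ℝ} {F R : Finset G}

/-- The subsets of `F` containing at least the proportion `1 - ε` of its points. -/
noncomputable def largeSubsets (ε : ℝ) (F : Finset G) : Finset (Finset G) :=
  F.powerset.filter fun T => (1 - ε) * (F.card : ℝ) ≤ T.card

theorem mem_largeSubsets :
    R ∈ largeSubsets ε F ↔ R ⊆ F ∧ (1 - ε) * (F.card : ℝ) ≤ R.card := by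
  rw [largeSubsets, Finset.mem_filter, Finset.mem_powerset]

end LargeSubsets

section QuasiTiling

variable {G : Type u} {X ι : Type*} [Group G] [MulAction G X] {ε η : ℝ}
  {P P' : Finset G → Set X → Prop} {F : Finset G} {S T : ι → Finset G} {V : ι → Set X}
  {B C : Set X}

/-- The points of `B` which are moved outside of `C` by exactly the elements of `R` among those
of `F`. The towers `(R, freshBase F B C R)` can be added to a castle with footprint `C`. -/
def freshBase (F : Finset G) (B C : Set X) (R : Finset G) : Set X :=
  {x | x ∈ B ∧ visits F Cᶜ x = R}

theorem IsTower.eq_of_smul_eq (h : IsTower G X F B) {s t : G} (hs : s ∈ F) (ht : t ∈ F) {x y : X}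
    (hx : x ∈ B) (hy : y ∈ B) (hxy : s • x = t • y) : s = t := by
  by_contra hst
  exact (h hs ht hst).ne_of_mem (smul_mem_smul_set hx) (smul_mem_smul_set hy) hxy

theorem isCastle_freshBase (h : IsTower G X F B) :
    IsCastle (fun R : largeSubsets ε F => R.1) (fun R => freshBase F B C R) := by
  intro R R' s hs t ht x hx y hy hxy
  have hst : s = t := h.eq_of_smul_eq ((mem_largeSubsets.1 R.2).1 hs)
    ((mem_largeSubsets.1 R'.2).1 ht) hx.1 hy.1 hxy
  subst hst
  obtain rfl := smul_left_cancel s hxy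
  exact ⟨Subtype.ext (hx.2.symm.trans hy.2), rfl⟩

theorem disjoint_footprint_freshBase :
    Disjoint C (footprint (fun R : largeSubsets ε F => R.1) fun R => freshBase F B C R) := by
  rw [disjoint_right]
  intro y hy
  obtain ⟨R, s, hs, x, hx, rfl⟩ := mem_footprint.1 hy
  exact (mem_visits.1 (hx.2 ▸ hs)).2

/-- A quasi-tiling consists of quasi-tiles `T i` with bases `V i`, whose overlaps are removed by
passing to shapes `S i ⊆ T i` which still contain the proportion `1 - ε` of `T i` and form an honest
castle. The field `smul_mem` says that every point met by a quasi-tile is met by the castle. -/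
structure IsQuasiTiling [MeasurableSpace X] (ε : ℝ) (P : Finset G → Set X → Prop)
    (S T : ι → Finset G) (V : ι → Set X) : Prop where
  isCastle : IsCastle S V
  measurableSet : ∀ i, MeasurableSet (V i)
  shape_mem : ∀ i, S i ∈ largeSubsets ε (T i)
  smul_mem : ∀ i, ∀ t ∈ T i, ∀ x ∈ V i, t • x ∈ footprint S V
  prop : ∀ i, P (T i) (V i)

theorem IsQuasiTiling.mono [MeasurableSpace X] (h : IsQuasiTiling ε P S T V)
    (hP : ∀ R W, P R W → P' R W) : IsQuasiTiling ε P' S T V :=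
  { h with prop := fun i => hP _ _ (h.prop i) }

variable [MeasurableSpace X] [MeasurableConstSMul G X]

theorem IsQuasiTiling.extend [Countable ι] (h : IsQuasiTiling ε P S T V) (hB : MeasurableSet B)
    (hF : IsTower G X F B) (hP : ∀ W ⊆ B, P F W) :
    IsQuasiTiling ε P (Sum.elim S fun R : largeSubsets ε F => R.1) (Sum.elim T fun _ => F)
      (Sum.elim V fun R => freshBase F B (footprint S V) R) where
  isCastle := h.isCastle.sumElim (isCastle_freshBase hF) disjoint_footprint_freshBase
  measurableSet := by
    rintro (i | R)
    · exact h.measurableSet i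
    · exact hB.inter (measurableSet_setOf_visits_eq (measurableSet_footprint h.measurableSet).compl)
  shape_mem := by
    rintro (i | R)
    · exact h.shape_mem i
    · exact R.2
  smul_mem := by
    rw [footprint_sumElim]
    rintro (i | R) t ht x hx
    · exact Or.inl (h.smul_mem i t ht x hx)
    · by_cases htx : t • x ∈ footprint S V
      · exact Or.inl htx
      · have htR : t ∈ R.1 := hx.2 ▸ mem_visits.2 ⟨ht, htx⟩
        exact Or.inr (mem_footprint.2 ⟨R, t, htR, x, hx, rfl⟩)
  prop := by
    rintro (i | R)
    · exact h.prop i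
    · exact hP _ fun x hx => hx.1

theorem IsQuasiTiling.le_card_visits_extend [Countable ι] (h : IsQuasiTiling ε P S T V)
    (hB : MeasurableSet B) (hF : IsTower G X F B) (hP : ∀ W ⊆ B, P F W) (hε : ε ≤ 1) {x : X}
    (hx : x ∈ B) :
    ε * F.card ≤ (visits F (footprint (Sum.elim S fun R : largeSubsets ε F => R.1)
      (Sum.elim V fun R => freshBase F B (footprint S V) R)) x).card := by
  by_cases hlarge : visits F (footprint S V)ᶜ x ∈ largeSubsets ε F
  · have hall : F ⊆ visits F (footprint (Sum.elim S fun R : largeSubsets ε F => R.1)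
        (Sum.elim V fun R => freshBase F B (footprint S V) R)) x := fun f hf =>
      mem_visits.2 ⟨hf, (h.extend hB hF hP).smul_mem (Sum.inr ⟨_, hlarge⟩) f hf x ⟨hx, rfl⟩⟩
    calc ε * F.card ≤ 1 * F.card := by gcongr
      _ ≤ _ := by rw [one_mul]; exact_mod_cast Finset.card_le_card hall
  · have hsmall : ((visits F (footprint S V)ᶜ x).card : ℝ) < (1 - ε) * F.card := by
      simpa only [mem_largeSubsets, visits_subset, true_and, not_le] using hlarge
    have hsum : ((visits F (footprint S V) x).card : ℝ) + (visits F (footprint S V)ᶜ x).card =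
        F.card := mod_cast card_visits_add_card_visits_compl F _ x
    calc ε * F.card ≤ (visits F (footprint S V) x).card := by linarith
      _ ≤ _ := by
        gcongr
        refine visits_mono ?_
        rw [footprint_sumElim]
        exact subset_union_left

/-- `C` is the footprint of a finite quasi-tiling. -/
def IsQuasiTiled (ε : ℝ) (P : Finset G → Set X → Prop) (C : Set X) : Prop :=
  ∃ (ι : Type u) (_ : Fintype ι) (S T : ι → Finset G) (V : ι → Set X),
    IsQuasiTiling ε P S T V ∧ footprint S V = C

omit [MeasurableConstSMul G X] in
theorem IsQuasiTiled.mono (h : IsQuasiTiled ε P C) (hP : ∀ R W, P R W → P' R W) :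
    IsQuasiTiled ε P' C := by
  obtain ⟨ι, hι, S, T, V, hST, rfl⟩ := h
  exact ⟨ι, hι, S, T, V, hST.mono hP, rfl⟩

omit [MeasurableConstSMul G X] in
theorem isQuasiTiled_empty : IsQuasiTiled ε P ∅ :=
  ⟨PEmpty, inferInstance, PEmpty.elim, PEmpty.elim, PEmpty.elim,
    ⟨nofun, nofun, nofun, nofun, nofun⟩, iUnion_of_empty _⟩

theorem IsQuasiTiled.measurableSet (h : IsQuasiTiled ε P C) : MeasurableSet C := by
  obtain ⟨ι, _, S, T, V, hST, rfl⟩ := h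
  exact measurableSet_footprint hST.measurableSet

theorem IsQuasiTiled.exists_superset (h : IsQuasiTiled ε P C) (hε : ε ≤ 1) (hB : MeasurableSet B)
    (hF : IsTower G X F B) (hP : ∀ W ⊆ B, P F W) :
    ∃ C', C ⊆ C' ∧ IsQuasiTiled ε P C' ∧ ∀ x ∈ B, ε * F.card ≤ (visits F C' x).card := by
  obtain ⟨ι, _, S, T, V, hST, rfl⟩ := h
  refine ⟨_, ?_, ⟨ι ⊕ largeSubsets ε F, inferInstance, _, _, _, hST.extend hB hF hP, rfl⟩,
    fun x hx => hST.le_card_visits_extend hB hF hP hε hx⟩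
  rw [footprint_sumElim]
  exact subset_union_left

theorem IsQuasiTiled.exists_superset_of_finset {κ : Type*} {U : κ → Set X} (l : Finset κ)
    (h : IsQuasiTiled ε P C) (hε : ε ≤ 1) (hU : ∀ k, MeasurableSet (U k))
    (hF : ∀ k, IsTower G X F (U k)) (hP : ∀ k, ∀ W ⊆ U k, P F W) :
    ∃ C', C ⊆ C' ∧ IsQuasiTiled ε P C' ∧ ∀ k ∈ l, ∀ x ∈ U k, ε * F.card ≤ (visits F C' x).card := by
  classical
  induction l using Finset.induction_on with
  | empty => exact ⟨C, subset_rfl, h, by simp⟩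
  | insert a l _ ih =>
    obtain ⟨C₁, hCC₁, hC₁, hl⟩ := ih
    obtain ⟨C₂, hC₁₂, hC₂, ha⟩ := hC₁.exists_superset hε (hU a) (hF a) (hP a)
    refine ⟨C₂, hCC₁.trans hC₁₂, hC₂, fun k hk x hx => ?_⟩
    rcases Finset.mem_insert.1 hk with rfl | hk
    · exact ha x hx
    · exact (hl k hk x hx).trans (mod_cast Finset.card_le_card (visits_mono hC₁₂))

end QuasiTiling

section OrnsteinWeiss

open Filter Topology

variable {G : Type u} {X : Type*} [Group G] [MulAction G X] {ε η : ℝ} {F : Finset G}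

theorem IsQuasiTiling.compl_footprint_subset [MeasurableSpace X] [DecidableEq G] {ι : Type*}
    {P : Finset G → Set X → Prop} {S T : ι → Finset G} {V : ι → Set X}
    (h : IsQuasiTiling ε P S T V) (F : Finset G) :
    (footprint S V)ᶜ ⊆ {x | visits F (footprint S V) x = ∅} ∪
      ⋃ i, ⋃ g ∈ (F⁻¹ * T i) \ T i, g • V i := by
  intro x hx
  by_cases hvis : visits F (footprint S V) x = ∅
  · exact Or.inl hvis
  obtain ⟨f, hf⟩ := Finset.nonempty_iff_ne_empty.2 hvis
  obtain ⟨hfF, hfx⟩ := mem_visits.1 hf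
  obtain ⟨i, s, hs, v, hv, hsv⟩ := mem_footprint.1 hfx
  have hxv : (f⁻¹ * s) • v = x := by rw [mul_smul, hsv, inv_smul_smul]
  have hmem : f⁻¹ * s ∈ (F⁻¹ * T i) \ T i := Finset.mem_sdiff.2
    ⟨Finset.mul_mem_mul (Finset.inv_mem_inv hfF) ((mem_largeSubsets.1 (h.shape_mem i)).1 hs),
      fun hT => hx (hxv ▸ h.smul_mem i _ hT v hv)⟩
  exact Or.inr (mem_iUnion.2 ⟨i, mem_iUnion₂.2 ⟨_, hmem, v, hv, hxv⟩⟩)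

variable [MeasurableSpace X] {μ : Measure X} [IsProbabilityMeasure μ] [SMulInvariantMeasure G X μ]

theorem IsQuasiTiling.measureReal_boundary_le [MeasurableConstSMul G X] [DecidableEq G]
    {ι : Type*} [Finite ι] {S T : ι → Finset G} {V : ι → Set X}
    (h : IsQuasiTiling ε (fun R _ => FolnerInv G F⁻¹ η R) S T V) (hε : ε ≤ 1 / 2) (hη : 0 ≤ η) :
    μ.real (⋃ i, ⋃ g ∈ (F⁻¹ * T i) \ T i, g • V i) ≤ 2 * (F.card * η) := by
  have := Fintype.ofFinite ι
  have hcard (i) : (T i).card ≤ 2 * ((S i).card : ℝ) := by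
    have hS := (mem_largeSubsets.1 (h.shape_mem i)).2
    have hT : (1 / 2 : ℝ) * (T i).card ≤ (1 - ε) * (T i).card := by
      gcongr
      linarith
    linarith
  calc μ.real (⋃ i, ⋃ g ∈ (F⁻¹ * T i) \ T i, g • V i)
      ≤ ∑ i, μ.real (⋃ g ∈ (F⁻¹ * T i) \ T i, g • V i) := measureReal_iUnion_fintype_le _
    _ ≤ ∑ i, F.card * (η * (2 * (S i).card)) * μ.real (V i) := by
        refine Finset.sum_le_sum fun i _ => (measureReal_biUnion_smul_le _ id _).trans ?_
        gcongr
        calc (((F⁻¹ * T i) \ T i).card : ℝ) ≤ F⁻¹.card * (η * (T i).card) :=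
              (h.prop i).card_mul_sdiff_le
          _ ≤ F.card * (η * (2 * (S i).card)) := by
              rw [Finset.card_inv]
              gcongr
              exact hcard i
    _ = 2 * (F.card * η) * ∑ i, (S i).card * μ.real (V i) := by
        rw [Finset.mul_sum]
        exact Finset.sum_congr rfl fun i _ => by ring
    _ ≤ 2 * (F.card * η) * 1 := by
        gcongr
        exact (h.isCastle.measureReal_footprint h.measurableSet).symm.trans_le measureReal_le_one
    _ = 2 * (F.card * η) := mul_one _

theorem IsQuasiTiled.measureReal_compl_le [MeasurableConstSMul G X] [DecidableEq G] {C : Set X}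
    (h : IsQuasiTiled ε (fun R _ => FolnerInv G F⁻¹ η R) C) (hε : ε ≤ 1 / 2) (hη : 0 ≤ η) :
    μ.real Cᶜ ≤ μ.real {x | visits F C x = ∅} + 2 * (F.card * η) := by
  obtain ⟨ι, _, S, T, V, hST, rfl⟩ := h
  calc μ.real (footprint S V)ᶜ
      ≤ μ.real {x | visits F (footprint S V) x = ∅} +
          μ.real (⋃ i, ⋃ g ∈ (F⁻¹ * T i) \ T i, g • V i) :=
        (measureReal_mono (hST.compl_footprint_subset F)).trans (measureReal_union_le _ _)
    _ ≤ _ := by gcongr; exact hST.measureReal_boundary_le hε hη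

theorem mul_measureReal_visits_eq_empty_le [MeasurableConstSMul G X] {C C' : Set X}
    (hC : MeasurableSet C) (hC' : MeasurableSet C') (hF : F.Nonempty)
    (h : ∀ x, ε * F.card ≤ (visits F C' x).card) :
    ε * μ.real {x | visits F C x = ∅} ≤ μ.real (C' \ C) := by
  have hF0 : (0 : ℝ) < F.card := mod_cast hF.card_pos
  have hcount : ∀ x ∈ {x | visits F C x = ∅}, ε * F.card ≤ (visits F (C' \ C) x).card := by
    intro x hx
    have hsub : visits F C' x ⊆ visits F (C' \ C) x := fun f hf =>
      mem_visits.2 ⟨visits_subset hf, (mem_visits.1 hf).2, fun hfC =>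
        Finset.notMem_empty f (hx ▸ mem_visits.2 ⟨visits_subset hf, hfC⟩)⟩
    exact (h x).trans (mod_cast Finset.card_le_card hsub)
  have hle := mul_measureReal_le_of_le_card_visits (μ := μ) (measurableSet_setOf_visits_eq hC)
    (hC'.diff hC) hcount
  refine le_of_mul_le_mul_left ?_ hF0
  linarith

/-- Sufficiently small sets near any given point are the base of a tower of shape `F` which has
property `P`. -/
def IsLocallyTileable [TopologicalSpace X] (P : Finset G → Set X → Prop) (F : Finset G) : Prop :=
  ∀ x : X, ∀ᶠ U in (𝓝 x).smallSets, IsTower G X F U ∧ P F U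

variable [TopologicalSpace X] [CompactSpace X] [OpensMeasurableSpace X] [MeasurableConstSMul G X]
  {P Q : Finset G → Set X → Prop} {C : Set X}

theorem IsQuasiTiled.exists_superset_of_isLocallyTileable
    (h : IsQuasiTiled ε P C) (hε : ε ≤ 1) (hF : IsLocallyTileable P F) :
    ∃ C', C ⊆ C' ∧ IsQuasiTiled ε P C' ∧ ∀ x, ε * F.card ≤ (visits F C' x).card := by
  choose U hU hUF using fun x => eventually_smallSets.1 (hF x)
  obtain ⟨l, -, hl⟩ := isCompact_univ.elim_nhds_subcover (fun x => interior (U x))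
    fun x _ => interior_mem_nhds.2 (hU x)
  obtain ⟨C', hCC', hC', hcard⟩ := h.exists_superset_of_finset l hε
    (fun k => isOpen_interior.measurableSet) (fun k => (hUF k _ interior_subset).1)
    fun k W hW => (hUF k W (hW.trans interior_subset)).2
  refine ⟨C', hCC', hC', fun x => ?_⟩
  obtain ⟨k, hk, hx⟩ := mem_iUnion₂.1 (hl (mem_univ x))
  exact hcard k hk x hx

theorem IsQuasiTiled.exists_measureReal_compl_le [DecidableEq G]
    (h : IsQuasiTiled ε (fun R W => P R W ∧ FolnerInv G F⁻¹ η R) C) (hF : F.Nonempty)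
    (hFP : IsLocallyTileable P F) (hε0 : 0 ≤ ε) (hε : ε ≤ 1 / 2) (hη : 0 ≤ η) :
    ∃ C', IsQuasiTiled ε P C' ∧
      1 - μ.real C' ≤ (1 - ε) * (1 - μ.real C) + ε * (2 * (F.card * η)) := by
  obtain ⟨C', hCC', hC', hcard⟩ :=
    (h.mono fun R W hRW => hRW.1).exists_superset_of_isLocallyTileable (by linarith) hFP
  have hgain := mul_measureReal_visits_eq_empty_le (μ := μ) h.measurableSet hC'.measurableSet
    hF hcard
  have hloss := (h.mono fun R W hRW => hRW.2).measureReal_compl_le (μ := μ) hε hη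
  rw [measureReal_sdiff hCC' h.measurableSet] at hgain
  rw [probReal_compl_eq_one_sub h.measurableSet] at hloss
  refine ⟨C', hC', ?_⟩
  have := mul_le_mul_of_nonneg_left hloss hε0
  linarith

theorem AmenableGroup.exists_isQuasiTiled (hG : AmenableGroup G)
    (hQ : ∀ F, IsLocallyTileable Q F) {γ : ℝ} (hε0 : 0 ≤ ε) (hε : ε ≤ 1 / 2) (hγ : 0 < γ) (k : ℕ) :
    ∀ (K : Finset G) (δ : ℝ), 0 < δ →
      ∃ C, IsQuasiTiled (X := X) ε (fun R W => FolnerInv G K δ R ∧ Q R W) C ∧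
        1 - μ.real C ≤ (1 - ε) ^ k + γ := by
  classical
  induction k with
  | zero =>
    intro K δ _
    refine ⟨∅, isQuasiTiled_empty, ?_⟩
    rw [measureReal_empty, pow_zero, sub_zero]
    linarith
  | succ k ih =>
    intro K δ hδ
    obtain ⟨F, hF, hFK⟩ := hG K δ hδ
    have : (0 : ℝ) < F.card := mod_cast hF.card_pos
    set η := γ / (2 * F.card) with hη
    obtain ⟨C, hC, hCk⟩ := ih (K ∪ F⁻¹) (min δ η) (by positivity)
    obtain ⟨C', hC', hle⟩ := IsQuasiTiled.exists_measureReal_compl_le (μ := μ)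
      (P := fun R W => FolnerInv G K δ R ∧ Q R W) (F := F) (η := η)
      (hC.mono fun R W hRW =>
        ⟨⟨hRW.1.mono Finset.subset_union_left (min_le_left _ _), hRW.2⟩,
          hRW.1.mono Finset.subset_union_right (min_le_right _ _)⟩)
      hF (fun x => (hQ F x).mono fun U hU => ⟨hU.1, hFK, hU.2⟩) hε0 hε (by positivity)
    refine ⟨C', hC', hle.trans ?_⟩
    calc (1 - ε) * (1 - μ.real C) + ε * (2 * (F.card * η))
        ≤ (1 - ε) * ((1 - ε) ^ k + γ) + ε * (2 * (F.card * η)) := by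
          gcongr
          linarith
      _ = (1 - ε) ^ (k + 1) + γ := by
          rw [hη]
          field_simp
          ring

theorem AmenableGroup.exists_isCastle (hG : AmenableGroup G) (hQ : ∀ F, IsLocallyTileable Q F)
    (hQ' : ∀ S T W, S ⊆ T → Q T W → Q S W) (K : Finset G) {δ γ : ℝ} (hδ : 0 < δ) (hδ1 : δ ≤ 1)
    (hγ : 0 < γ) :
    ∃ (ι : Type u) (_ : Fintype ι) (S : ι → Finset G) (V : ι → Set X),
      IsCastle S V ∧ (∀ i, MeasurableSet (V i)) ∧ (∀ i, FolnerInv G K δ (S i)) ∧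
        (∀ i, Q (S i) (V i)) ∧ 1 - γ < μ.real (footprint S V) := by
  set ε : ℝ := min (1 / 2) (δ / 2 / (1 + K.card)) with hε
  have hε0 : 0 < ε := by positivity
  have hεδ : δ / 2 + (1 + K.card) * ε ≤ δ := by
    have := (le_div_iff₀' (by positivity)).1 (min_le_right (1 / 2) (δ / 2 / (1 + (K.card : ℝ))))
    linarith
  obtain ⟨k, hk⟩ := exists_pow_lt_of_lt_one (half_pos hγ) (sub_lt_self 1 hε0)
  obtain ⟨_, ⟨ι, hι, S, T, V, h, rfl⟩, hC⟩ := hG.exists_isQuasiTiled (μ := μ) hQ hε0.le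
    (min_le_left _ _) (half_pos hγ) k K (δ / 2) (half_pos hδ)
  have hST (i) := mem_largeSubsets.1 (h.shape_mem i)
  refine ⟨ι, hι, S, V, h.isCastle, h.measurableSet, fun i => ?_, fun i => ?_, by linarith⟩
  · exact (h.prop i).1.of_subset (hST i).1 (hST i).2 hεδ hδ1
  · exact hQ' _ _ _ (hST i).1 (h.prop i).2

end OrnsteinWeiss

/-! ### Open castles -/

section OpenFolnerCastle

variable {G X ι κ : Type*} [Group G] [MetricSpace X] [MulAction G X] {K K' : Finset G}
  {δ δ' : ℝ} {S : ι → Finset G} {V : ι → Set X}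

/-- The open sets `V i` are the bases of a castle with `(K, δ)`-invariant shapes `S i`, even after
passing to closures, and all its levels have diameter less than `δ`. -/
structure IsOpenFolnerCastle (K : Finset G) (δ : ℝ) (S : ι → Finset G)
    (V : ι → Set X) : Prop where
  isOpen : ∀ i, IsOpen (V i)
  isCastle_closure : IsCastle S fun i => closure (V i)
  folnerInv : ∀ i, FolnerInv G K δ (S i)
  diam_lt : ∀ i, ∀ s ∈ S i, Metric.diam (s • closure (V i)) < δ

theorem IsOpenFolnerCastle.isCastle (h : IsOpenFolnerCastle K δ S V) : IsCastle S V :=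
  h.isCastle_closure.mono fun _ => subset_closure

theorem IsOpenFolnerCastle.mono (h : IsOpenFolnerCastle K' δ' S V) (hK : K ⊆ K')
    (hδ : δ' ≤ δ) : IsOpenFolnerCastle K δ S V where
  isOpen := h.isOpen
  isCastle_closure := h.isCastle_closure
  folnerInv i := (h.folnerInv i).mono hK hδ
  diam_lt i s hs := (h.diam_lt i s hs).trans_le hδ

theorem IsOpenFolnerCastle.comp_injective (h : IsOpenFolnerCastle K δ S V) {e : κ → ι}
    (he : Function.Injective e) : IsOpenFolnerCastle K δ (S ∘ e) (V ∘ e) where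
  isOpen i := h.isOpen (e i)
  isCastle_closure i j s hs t ht x hx y hy hxy :=
    (h.isCastle_closure (e i) (e j) s hs t ht x hx y hy hxy).imp_left (@he i j)
  folnerInv i := h.folnerInv (e i)
  diam_lt i := h.diam_lt (e i)

end OpenFolnerCastle

section OpenCastle

open Filter Topology

section Topological

variable {G : Type u} {X : Type*} [Group G] [MulAction G X] [TopologicalSpace X] [T2Space X]
  [ContinuousConstSMul G X]

theorem FreeAction.eventually_isTower (hfree : FreeAction G X) (F : Finset G) (x : X) :
    ∀ᶠ U in (𝓝 x).smallSets, IsTower G X F U := by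
  refine (eventually_all_finset F).2 fun s _ => (eventually_all_finset F).2 fun t _ => ?_
  by_cases hst : s = t
  · exact Eventually.of_forall fun _ hne => absurd hst hne
  have hne : s • x ≠ t • x := fun h => hst <| (inv_mul_eq_one.1 <| hfree (t⁻¹ * s) x <| by
    rw [mul_smul, h, inv_smul_smul]).symm
  obtain ⟨A, B, hA, hB, hxA, hxB, hAB⟩ := t2_separation hne
  refine eventually_smallSets.2 ⟨(s • ·) ⁻¹' A ∩ (t • ·) ⁻¹' B,
    inter_mem ((hA.preimage (continuous_const_smul s)).mem_nhds hxA)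
      ((hB.preimage (continuous_const_smul t)).mem_nhds hxB), fun U hU _ => hAB.mono ?_ ?_⟩
  · exact smul_set_subset_iff.2 fun y hy => (hU hy).1
  · exact smul_set_subset_iff.2 fun y hy => (hU hy).2

end Topological

variable {G : Type u} {X : Type*} [Group G] [MetricSpace X] [MulAction G X]
  [ContinuousConstSMul G X] {δ : ℝ}

theorem eventually_diam_smul_lt (g : G) (x : X) (hδ : 0 < δ) :
    ∀ᶠ U in (𝓝 x).smallSets, Metric.diam (g • U) < δ := by
  refine eventually_smallSets.2 ⟨(g • ·) ⁻¹' Metric.closedBall (g • x) (δ / 4),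
    (continuous_const_smul g).continuousAt (Metric.closedBall_mem_nhds _ (by positivity)),
    fun U hU => ?_⟩
  calc Metric.diam (g • U) ≤ Metric.diam (Metric.closedBall (g • x) (δ / 4)) :=
        Metric.diam_mono (smul_set_subset_iff.2 fun y hy => hU hy) Metric.isBounded_closedBall
    _ ≤ 2 * (δ / 4) := Metric.diam_closedBall (by positivity)
    _ < δ := by linarith

theorem FreeAction.isLocallyTileable (hfree : FreeAction G X) (hδ : 0 < δ) (F : Finset G) :
    IsLocallyTileable (X := X) (fun S W => ∀ s ∈ S, Metric.diam (s • W) < δ) F := fun x =>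
  (hfree.eventually_isTower F x).and <|
    (eventually_all_finset F).2 fun s _ => eventually_diam_smul_lt s x hδ

theorem eventually_cthickening_subset {A U : Set X} (hA : IsCompact A) (hU : IsOpen U)
    (hAU : A ⊆ U) : ∀ᶠ r in 𝓝[>] (0 : ℝ), Metric.cthickening r A ⊆ U := by
  obtain ⟨δ, hδ, hsub⟩ := hA.exists_cthickening_subset_open hU hAU
  filter_upwards [Ioo_mem_nhdsGT hδ] with r hr
  exact (Metric.cthickening_mono hr.2.le A).trans hsub

theorem eventually_diam_smul_cthickening_lt {A : Set X} (hA : IsCompact A) (g : G)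
    (hδ : Metric.diam (g • A) < δ) :
    ∀ᶠ r in 𝓝[>] (0 : ℝ), Metric.diam (g • Metric.cthickening r A) < δ := by
  set η := (δ - Metric.diam (g • A)) / 4 with hη
  have hη0 : 0 < η := by rw [hη]; linarith
  filter_upwards [eventually_cthickening_subset hA
    (Metric.isOpen_thickening.preimage (continuous_const_smul g))
    fun x hx => Metric.self_subset_thickening hη0 (g • A) (smul_mem_smul_set hx)] with r hr
  calc Metric.diam (g • Metric.cthickening r A) ≤ Metric.diam (Metric.thickening η (g • A)) :=
        Metric.diam_mono (smul_set_subset_iff.2 fun x hx => hr hx)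
          (hA.smul g).isBounded.thickening
    _ ≤ Metric.diam (g • A) + 2 * η := Metric.diam_thickening_le _ hη0.le
    _ < δ := by linarith

variable {ι : Type*} [Finite ι] {S : ι → Finset G} {L : ι → Set X}

theorem IsCastle.eventually_cthickening (h : IsCastle S L) (hL : ∀ i, IsCompact (L i)) :
    ∀ᶠ r in 𝓝[>] (0 : ℝ), IsCastle S fun i => Metric.cthickening r (L i) := by
  refine eventually_all.2 fun i => eventually_all.2 fun j => (eventually_all_finset (S i)).2
    fun s hs => (eventually_all_finset (S j)).2 fun t ht => ?_
  by_cases hst : i = j ∧ s = t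
  · exact Eventually.of_forall fun _ _ _ _ _ _ => hst
  obtain ⟨A, B, hA, hB, hLA, hLB, hAB⟩ := SeparatedNhds.of_isCompact_isCompact
    ((hL i).smul s) ((hL j).smul t) (h.disjoint_levels hs ht hst)
  filter_upwards [eventually_cthickening_subset (hL i) (hA.preimage (continuous_const_smul s))
      (smul_set_subset_iff.1 hLA),
    eventually_cthickening_subset (hL j) (hB.preimage (continuous_const_smul t))
      (smul_set_subset_iff.1 hLB)] with r hrA hrB x hx y hy hxy
  exact absurd hxy (hAB.ne_of_mem (hrA hx) (hrB hy))

theorem IsCastle.exists_isOpenFolnerCastle [CompactSpace X] {K : Finset G} (h : IsCastle S L)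
    (hL : ∀ i, IsCompact (L i)) (hS : ∀ i, FolnerInv G K δ (S i))
    (hdiam : ∀ i, ∀ s ∈ S i, Metric.diam (s • L i) < δ) :
    ∃ V : ι → Set X, IsOpenFolnerCastle K δ S V ∧ ∀ i, L i ⊆ V i := by
  have hsmall : ∀ᶠ r in 𝓝[>] (0 : ℝ), ∀ i, ∀ s ∈ S i,
      Metric.diam (s • Metric.cthickening r (L i)) < δ := eventually_all.2 fun i =>
    (eventually_all_finset (S i)).2 fun s hs =>
      eventually_diam_smul_cthickening_lt (hL i) s (hdiam i s hs)
  obtain ⟨r, ⟨hcastle, hsmall⟩, hr⟩ :=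
    (((h.eventually_cthickening hL).and hsmall).and self_mem_nhdsWithin).exists
  have hclosure (i) : closure (Metric.thickening r (L i)) ⊆ Metric.cthickening r (L i) :=
    Metric.closure_thickening_subset_cthickening r (L i)
  refine ⟨fun i => Metric.thickening r (L i), ⟨fun i => Metric.isOpen_thickening,
    hcastle.mono hclosure, hS, fun i s hs => ?_⟩, fun i => Metric.self_subset_thickening hr _⟩
  exact (Metric.diam_mono (smul_set_mono (hclosure i)) (.all _)).trans_lt (hsmall i s hs)

variable [CompactSpace X] [MeasurableSpace X] [BorelSpace X] {μ : Measure X}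
  [IsProbabilityMeasure μ] [SMulInvariantMeasure G X μ]

theorem IsCastle.exists_isCompact {V : ι → Set X} (h : IsCastle S V)
    (hV : ∀ i, MeasurableSet (V i)) {c : ℝ} (hc : c < μ.real (footprint S V)) :
    ∃ L : ι → Set X, (∀ i, L i ⊆ V i) ∧ (∀ i, IsCompact (L i)) ∧ c < μ.real (footprint S L) := by
  have := Fintype.ofFinite ι
  obtain ⟨η, hη0, hη⟩ : ∃ η > 0, (∑ i, ((S i).card : ℝ)) * η < μ.real (footprint S V) - c :=
    exists_pos_mul_lt (sub_pos.2 hc) _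
  have hcompact (i) : ∃ L ⊆ V i, IsCompact L ∧ μ.real (V i) - η < μ.real L := by
    obtain ⟨L, hLV, hL, hlt⟩ := (hV i).exists_isCompact_lt_add (μ := μ) (measure_ne_top _ _)
      (ENNReal.ofReal_pos.2 hη0).ne'
    refine ⟨L, hLV, hL, sub_lt_iff_lt_add.2 ?_⟩
    have := ENNReal.toReal_strict_mono (by finiteness) hlt
    rwa [ENNReal.toReal_add (by finiteness) (by finiteness), ENNReal.toReal_ofReal hη0.le] at this
  choose L hLV hL hLμ using hcompact
  refine ⟨L, hLV, hL, ?_⟩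
  rw [h.measureReal_footprint hV] at hη
  rw [(h.mono hLV).measureReal_footprint fun i => (hL i).measurableSet]
  have hloss : ∑ i, (S i).card * (μ.real (V i) - η) ≤ ∑ i, (S i).card * μ.real (L i) := by
    gcongr with i
    exact (hLμ i).le
  simp only [mul_sub, Finset.sum_sub_distrib, ← Finset.sum_mul] at hloss
  linarith

theorem AmenableGroup.exists_isOpenFolnerCastle (hG : AmenableGroup G) (hfree : FreeAction G X)
    (μ : Measure X) [IsProbabilityMeasure μ] [SMulInvariantMeasure G X μ] (K : Finset G) {γ : ℝ}
    (hδ : 0 < δ) (hδ1 : δ ≤ 1) (hγ : 0 < γ) :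
    ∃ (ι : Type u) (_ : Fintype ι) (S : ι → Finset G) (V : ι → Set X),
      IsOpenFolnerCastle K δ S V ∧ 1 - γ < μ.real (footprint S V) := by
  obtain ⟨ι, hι, S, V, hcastle, hV, hS, hdiam, hμ⟩ := hG.exists_isCastle (μ := μ)
    (hfree.isLocallyTileable hδ) (fun S T W hST hT s hs => hT s (hST hs)) K hδ hδ1 hγ
  obtain ⟨L, hLV, hL, hLμ⟩ := hcastle.exists_isCompact hV hμ
  obtain ⟨U, hU, hLU⟩ := (hcastle.mono hLV).exists_isOpenFolnerCastle hL hS fun i s hs =>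
    (Metric.diam_mono (smul_set_mono (hLV i)) (.all _)).trans_lt (hdiam i s hs)
  exact ⟨ι, hι, S, U, hU, hLμ.trans_le (measureReal_mono (footprint_mono hLU))⟩

end OpenCastle

/-! ### Invariant and ergodic measures -/

section Integral

open Filter Topology

variable {X : Type*} [TopologicalSpace X] [MeasurableSpace X]

theorem upperSemicontinuous_measureReal [OpensMeasurableSpace X] [HasOuterApproxClosed X]
    {R : Set X} (hR : IsClosed R) :
    UpperSemicontinuous fun μ : ProbabilityMeasure X => (μ : Measure X).real R := by
  have husc : UpperSemicontinuous fun μ : ProbabilityMeasure X => (μ : Measure X) R :=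
    upperSemicontinuous_iff_limsup_le.2 fun μ =>
      ProbabilityMeasure.limsup_measure_closed_le_of_tendsto (μs := id) tendsto_id hR
  intro μ c hμ
  filter_upwards [husc μ (ENNReal.ofReal c)
    ((ENNReal.lt_ofReal_iff_toReal_lt (measure_ne_top _ _)).2 hμ)] with ν hν
  exact (ENNReal.lt_ofReal_iff_toReal_lt (measure_ne_top _ _)).1 hν

/-- The coordinates of a probability measure in the locally convex space `C(X, ℝ) → ℝ`, where the
Krein–Milman lemma is available. -/
noncomputable def integralFunctional (μ : ProbabilityMeasure X) (f : C(X, ℝ)) : ℝ :=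
  ∫ x, f x ∂(μ : Measure X)

theorem integralFunctional_injective [BorelSpace X] [HasOuterApproxClosed X] :
    Function.Injective (integralFunctional (X := X)) := fun μ ν h =>
  Subtype.ext <| ext_of_forall_integral_eq_of_IsFiniteMeasure (μ := (μ : Measure X)) (ν := ν)
    fun f => congrFun h f.toContinuousMap

variable [CompactSpace X]

theorem integrable_continuousMap [OpensMeasurableSpace X] (f : C(X, ℝ)) (μ : Measure X)
    [IsFiniteMeasure μ] : Integrable f μ :=
  (BoundedContinuousFunction.mkOfCompact f).integrable μ

theorem continuous_integralFunctional [OpensMeasurableSpace X] :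
    Continuous (integralFunctional (X := X)) :=
  continuous_pi fun f => ProbabilityMeasure.continuous_integral_boundedContinuousFunction
    (BoundedContinuousFunction.mkOfCompact f)

end Integral

section Invariant

variable {G X : Type*} [Group G] [MulAction G X] [MeasurableSpace X] [MeasurableConstSMul G X]
  {μ : ProbabilityMeasure X}

theorem mem_MG_iff_smulInvariantMeasure :
    μ ∈ MG G X ↔ SMulInvariantMeasure G X (μ : Measure X) :=
  ((smulInvariantMeasure_tfae G (μ : Measure X)).out 0 5).symm

theorem smulInvariantMeasure_cond {μ : Measure X} [SMulInvariantMeasure G X μ] {B : Set X}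
    (hinv : ∀ g : G, g • B = B) : SMulInvariantMeasure G X (ProbabilityTheory.cond μ B) := by
  refine ⟨fun g s hs => ?_⟩
  have hpre : (g • ·) ⁻¹' B = B := by rw [preimage_smul, hinv]
  rw [ProbabilityTheory.cond_apply' (measurable_const_smul g hs), ProbabilityTheory.cond_apply' hs]
  nth_rw 2 [← hpre]
  rw [← preimage_inter, measure_preimage_smul]

theorem exists_eq_smul_add_smul_of_notMem_EG (hμ : μ ∈ MG G X) (hμE : μ ∉ EG G X) :
    ∃ ν₁ ∈ MG G X, ∃ ν₂ ∈ MG G X, ∃ a b : NNReal, 0 < a ∧ 0 < b ∧ a + b = 1 ∧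
      (μ : Measure X) = a • (ν₁ : Measure X) + b • (ν₂ : Measure X) ∧ ν₁ ≠ μ := by
  obtain ⟨B, hB, hinv, hB0, hB1⟩ : ∃ B, MeasurableSet B ∧ (∀ g : G, g • B = B) ∧
      μ B ≠ 0 ∧ μ B ≠ 1 := by
    by_contra! h
    exact hμE ⟨hμ, fun B hB hinv => or_iff_not_imp_left.2 (h B hB hinv)⟩
  have := mem_MG_iff_smulInvariantMeasure.1 hμ
  have hadd : μ B + μ Bᶜ = 1 := by
    rw [← ENNReal.coe_inj]
    simpa using prob_add_prob_compl (μ := (μ : Measure X)) hB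
  have hBc0 : μ Bᶜ ≠ 0 := fun h => hB1 (by rwa [h, add_zero] at hadd)
  have hinvc (g : G) : g • Bᶜ = Bᶜ := by rw [smul_set_compl, hinv]
  have hν₁ := smulInvariantMeasure_cond (μ := (μ : Measure X)) hinv
  have hν₂ := smulInvariantMeasure_cond (μ := (μ : Measure X)) hinvc
  have hB0' := (μ.null_iff_toMeasure_null B).not.1 hB0
  have hBc0' := (μ.null_iff_toMeasure_null Bᶜ).not.1 hBc0
  refine ⟨⟨_, ProbabilityTheory.cond_isProbabilityMeasure hB0'⟩,
    mem_MG_iff_smulInvariantMeasure.2 hν₁,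
    ⟨_, ProbabilityTheory.cond_isProbabilityMeasure hBc0'⟩,
    mem_MG_iff_smulInvariantMeasure.2 hν₂, μ B, μ Bᶜ, pos_of_ne_zero hB0, pos_of_ne_zero hBc0,
    hadd, ?_, fun h => hB1 ?_⟩
  · ext t -
    rw [← ProbabilityTheory.cond_add_cond_compl_eq hB]
    simp [mul_comm, ENNReal.smul_def]
  · rw [← h]
    simp [ProbabilityTheory.cond_apply_self hB0']

theorem ergodicSMul_of_mem_EG [Countable G] (hμ : μ ∈ EG G X) :
    ErgodicSMul G X (μ : Measure X) := by
  have := mem_MG_iff_smulInvariantMeasure.1 hμ.1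
  refine ⟨fun {s} hs hinv => ?_⟩
  let A : Set X := ⋂ g : G, (g • ·) ⁻¹' s
  have hAs : A =ᵐ[(μ : Measure X)] s := by
    rw [Filter.eventuallyEq_set]
    filter_upwards [ae_all_iff.2 fun g => Filter.eventuallyEq_set.1 (hinv g)] with x hx
    rw [mem_iInter]
    exact ⟨fun h => (hx 1).1 (h 1), fun h g => (hx g).2 h⟩
  have hAinv (g : G) : g • A = A := by
    ext x
    simp only [A, mem_smul_set_iff_inv_smul_mem, mem_iInter, mem_preimage, smul_smul]
    exact (Equiv.mulRight g⁻¹).forall_congr fun _ => Iff.rfl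
  refine Filter.EventuallyConst.congr (Filter.eventuallyConst_set'.2 ?_) hAs
  have hA : MeasurableSet A := .iInter fun g => measurable_const_smul g hs
  refine (hμ.2 A hA hAinv).imp (fun h => ?_) fun h => ?_
  · exact ae_eq_empty.2 ((μ.null_iff_toMeasure_null A).1 h)
  · refine ae_eq_univ.2 ((prob_compl_eq_zero_iff hA).2 ?_)
    rw [← ProbabilityMeasure.ennreal_coeFn_eq_coeFn_toMeasure, h, ENNReal.coe_one]

end Invariant

section Bauer

open Filter Topology

variable {G X : Type*} [Group G] [MulAction G X] [MetricSpace X] [ContinuousConstSMul G X]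

/-- Translation of functions by `g`, as an algebra homomorphism. -/
def translateHom (g : G) : C(X, ℝ) →ₐ[ℝ] C(X, ℝ) :=
  ContinuousMap.compRightAlgHom ℝ ℝ ⟨(g • ·), continuous_const_smul g⟩

theorem translateHom_apply (g : G) (f : C(X, ℝ)) (x : X) : translateHom g f x = f (g • x) := rfl

variable [MeasurableSpace X] [BorelSpace X]

theorem mem_MG_iff_integralFunctional_translateHom {μ : ProbabilityMeasure X} :
    μ ∈ MG G X ↔ ∀ (g : G) (f : C(X, ℝ)),
      integralFunctional μ (translateHom g f) = integralFunctional μ f := by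
  have hmap (g : G) (f : C(X, ℝ)) : integralFunctional μ (translateHom g f) =
      ∫ x, f x ∂(μ : Measure X).map (g • ·) :=
    (integral_map (measurable_const_smul g).aemeasurable f.continuous.aestronglyMeasurable).symm
  refine ⟨fun h g f => by rw [hmap, h g, integralFunctional], fun h g => ?_⟩
  have := Measure.isProbabilityMeasure_map (μ := (μ : Measure X))
    (measurable_const_smul g).aemeasurable
  refine ext_of_forall_integral_eq_of_IsFiniteMeasure fun f => ?_
  exact (hmap g f.toContinuousMap).symm.trans (h g f.toContinuousMap)

variable [CompactSpace X]

theorem isClosed_MG : IsClosed (MG G X) := by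
  have heq : MG G X = ⋂ (g : G) (f : C(X, ℝ)),
      {μ | integralFunctional μ (translateHom g f) = integralFunctional μ f} := by
    ext μ
    simp only [mem_MG_iff_integralFunctional_translateHom, mem_iInter, mem_ofPred_eq]
  rw [heq]
  have hcont (f : C(X, ℝ)) : Continuous fun μ => integralFunctional μ f :=
    (continuous_apply f).comp continuous_integralFunctional
  exact isClosed_iInter fun g => isClosed_iInter fun f => isClosed_eq (hcont _) (hcont f)

theorem mem_EG_of_mem_extremePoints {R : Set X} {μ : ProbabilityMeasure X} (hμ : μ ∈ MG G X)
    (hmax : IsMaxOn (fun ν : ProbabilityMeasure X => (ν : Measure X).real R) (MG G X) μ)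
    (hext : integralFunctional μ ∈ (integralFunctional ''
      {ν ∈ MG G X | (μ : Measure X).real R ≤ (ν : Measure X).real R}).extremePoints ℝ) :
    μ ∈ EG G X := by
  by_contra hμE
  obtain ⟨ν₁, hν₁, ν₂, hν₂, a, b, ha, hb, hab, hdecomp, hne⟩ :=
    exists_eq_smul_add_smul_of_notMem_EG hμ hμE
  have hab' : (a : ℝ) + b = 1 := by exact_mod_cast hab
  have hreal : (μ : Measure X).real R =
      a * (ν₁ : Measure X).real R + b * (ν₂ : Measure X).real R := by
    rw [hdecomp, measureReal_add_apply, measureReal_nnreal_smul_apply,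
      measureReal_nnreal_smul_apply]
  have h₁ : (ν₁ : Measure X).real R ≤ (μ : Measure X).real R := hmax hν₁
  have h₂ : (ν₂ : Measure X).real R ≤ (μ : Measure X).real R := hmax hν₂
  have ha' : (0 : ℝ) < a := ha
  have hb' : (0 : ℝ) < b := hb
  refine hne (integralFunctional_injective ((mem_extremePoints_iff_left.1 hext).2
    _ ⟨ν₁, ⟨hν₁, ?_⟩, rfl⟩ _ ⟨ν₂, ⟨hν₂, ?_⟩, rfl⟩ ⟨a, b, ha, hb, hab', ?_⟩))
  · refine le_of_mul_le_mul_left ?_ ha'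
    linear_combination (b : ℝ) * h₂ + (μ : Measure X).real R * hab' + hreal
  · refine le_of_mul_le_mul_left ?_ hb'
    linear_combination (a : ℝ) * h₁ + (μ : Measure X).real R * hab' + hreal
  · funext f
    have hint (c : NNReal) (ν : ProbabilityMeasure X) :
      Integrable f (c • (ν : Measure X)) := integrable_continuousMap f _
    simp only [integralFunctional, Pi.add_apply, Pi.smul_apply]
    rw [hdecomp, integral_add_measure (hint a ν₁) (hint b ν₂), integral_smul_nnreal_measure,
      integral_smul_nnreal_measure]
    rfl

/-- The set of invariant measures maximizing `μ R` is a closed face of `MG G X`, so by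
Krein–Milman it contains an extreme point of `MG G X`. -/
theorem exists_mem_EG_measureReal_le {R : Set X} (hR : IsClosed R) {μ : ProbabilityMeasure X}
    (hμ : μ ∈ MG G X) : ∃ ν ∈ EG G X, (μ : Measure X).real R ≤ (ν : Measure X).real R := by
  have husc := upperSemicontinuous_measureReal hR
  obtain ⟨μ', hμ', hmax⟩ := (husc.upperSemicontinuousOn (MG G X)).exists_isMaxOn ⟨μ, hμ⟩
    isClosed_MG.isCompact
  have hface : IsCompact {ν ∈ MG G X | (μ' : Measure X).real R ≤ (ν : Measure X).real R} :=
    (isClosed_MG.inter (husc.isClosed_preimage _)).isCompact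
  obtain ⟨_, hext⟩ := (hface.image continuous_integralFunctional).extremePoints_nonempty
    ⟨_, mem_image_of_mem _ ⟨hμ', le_rfl⟩⟩
  obtain ⟨ν, ⟨hν, hle⟩, rfl⟩ := extremePoints_subset hext
  have heq : (ν : Measure X).real R = (μ' : Measure X).real R := (hmax hν).antisymm hle
  exact ⟨ν, mem_EG_of_mem_extremePoints hν (fun ν' hν' => (hmax hν').trans hle) (heq ▸ hext),
    (hmax hμ).trans hle⟩

end Bauer

/-! ### Mean ergodic theorem -/

section MeanErgodic

open ProbabilityTheory

theorem exists_mem_forall_norm_le_imp_eq {H : Type*} [NormedAddCommGroup H]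
    [InnerProductSpace ℝ H] [CompleteSpace H] {C : Set H} (hne : C.Nonempty) (hC : IsClosed C)
    (hconv : Convex ℝ C) : ∃ v ∈ C, ∀ w ∈ C, ‖w‖ ≤ ‖v‖ → w = v := by
  obtain ⟨v, hv, hmin⟩ := exists_norm_eq_iInf_of_complete_convex hne hC.isComplete hconv 0
  rw [norm_eq_iInf_iff_real_inner_le_zero hconv hv] at hmin
  refine ⟨v, hv, fun w hw hle => ?_⟩
  have hinner : ‖v‖ ^ 2 ≤ inner ℝ w v := by
    have h := hmin w hw
    rw [zero_sub, inner_neg_left, inner_sub_right, real_inner_self_eq_norm_sq,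
      real_inner_comm] at h
    linarith
  have hsq : ‖w - v‖ ^ 2 ≤ 0 := by
    rw [norm_sub_sq_real]
    nlinarith [norm_nonneg w, norm_nonneg v]
  exact sub_eq_zero.1 (norm_eq_zero.1 (sq_nonpos_iff _ |>.1 hsq))

theorem exists_ae_eq_const_of_forall_comp_smul {G X : Type*} [Group G] [MulAction G X]
    [MeasurableSpace X] {μ : Measure X} [ErgodicSMul G X μ] {β : Type*} [Nonempty β]
    [MeasurableSpace β] [MeasurableSpace.CountablySeparated β] {v : X → β} (hv : Measurable v)
    (hinv : ∀ g : G, (fun x => v (g • x)) =ᵐ[μ] v) : ∃ c, v =ᵐ[μ] fun _ => c := by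
  refine Filter.exists_eventuallyEq_const_of_forall_separating MeasurableSet fun U hU => ?_
  have hpre (g : G) : (g • ·) ⁻¹' (v ⁻¹' U) =ᵐ[μ] v ⁻¹' U :=
    (hinv g).preimage U
  exact Filter.eventuallyConst_set.1
    (aeconst_of_forall_preimage_smul_ae_eq G (hv hU).nullMeasurableSet hpre)

variable {G X : Type*} [Group G] [MulAction G X] [MetricSpace X] [ContinuousConstSMul G X]

theorem translateHom_translateHom (g h : G) (f : C(X, ℝ)) :
    translateHom g (translateHom h f) = translateHom (h * g) f := by
  ext x
  simp only [translateHom_apply, mul_smul]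

variable (G) in
/-- The convex combinations of translates of `f`. -/
def orbitHull (f : C(X, ℝ)) : Set C(X, ℝ) :=
  convexHull ℝ (range fun g : G => translateHom g f)

theorem mem_orbitHull_self (f : C(X, ℝ)) : f ∈ orbitHull G f :=
  subset_convexHull ℝ _ ⟨1, ContinuousMap.ext fun x => by rw [translateHom_apply, one_smul]⟩

theorem translateHom_mem_orbitHull {f u : C(X, ℝ)} (g : G) (hu : u ∈ orbitHull G f) :
    translateHom g u ∈ orbitHull G f := by
  have himage := mem_image_of_mem (translateHom g).toLinearMap hu
  rw [orbitHull, LinearMap.image_convexHull] at himage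
  refine convexHull_mono ?_ himage
  rintro _ ⟨_, ⟨h, rfl⟩, rfl⟩
  exact ⟨h * g, (translateHom_translateHom g h f).symm⟩

variable [MeasurableSpace X] [BorelSpace X] {μ : Measure X}

theorem integral_translateHom [SMulInvariantMeasure G X μ] (g : G) (f : C(X, ℝ)) :
    ∫ x, translateHom g f x ∂μ = ∫ x, f x ∂μ :=
  integral_smul_eq_self f

variable [CompactSpace X]

theorem integral_eq_of_mem_orbitHull [IsFiniteMeasure μ] [SMulInvariantMeasure G X μ]
    {f u : C(X, ℝ)} (hu : u ∈ orbitHull G f) : ∫ x, u x ∂μ = ∫ x, f x ∂μ := by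
  let I : C(X, ℝ) →ₗ[ℝ] ℝ :=
    { toFun u := ∫ x, u x ∂μ
      map_add' u v := integral_add (integrable_continuousMap u μ) (integrable_continuousMap v μ)
      map_smul' c u := integral_const_mul c u }
  refine convexHull_min (t := I ⁻¹' {I f}) ?_ ((convex_singleton _).linear_preimage I) hu
  rintro _ ⟨g, rfl⟩
  exact integral_translateHom g f

theorem variance_le_norm_toLp_sub_const_sq [IsProbabilityMeasure μ] (u : C(X, ℝ)) (c : ℝ) :
    Var[u; μ] ≤ ‖ContinuousMap.toLp 2 μ ℝ (u - ContinuousMap.const X c)‖ ^ 2 := by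
  calc Var[u; μ] = Var[fun x => u x - c; μ] :=
        (variance_sub_const u.continuous.aestronglyMeasurable c).symm
    _ ≤ ∫ x, (u x - c) ^ 2 ∂μ :=
        variance_le_expectation_sq (by fun_prop)
    _ = ‖ContinuousMap.toLp 2 μ ℝ (u - ContinuousMap.const X c)‖ ^ 2 := by
        rw [← real_inner_self_eq_norm_sq, ContinuousMap.inner_toLp]
        simp [sq]

theorem exists_const_mem_closure_toLp_orbitHull [IsProbabilityMeasure μ] [ErgodicSMul G X μ]
    (f : C(X, ℝ)) : ∃ c : ℝ, ContinuousMap.toLp 2 μ ℝ (ContinuousMap.const X c) ∈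
      closure (ContinuousMap.toLp 2 μ ℝ '' orbitHull G f) := by
  let T := ContinuousMap.toLp (α := X) (E := ℝ) 2 μ ℝ
  let U (g : G) : Lp ℝ 2 μ → Lp ℝ 2 μ :=
    Lp.compMeasurePreserving (g • ·) (measurePreserving_smul g μ)
  obtain ⟨v, hv, hmin⟩ := exists_mem_forall_norm_le_imp_eq (C := closure (T '' orbitHull G f))
    ⟨T f, subset_closure (mem_image_of_mem T (mem_orbitHull_self f))⟩ isClosed_closure
    ((convex_convexHull ℝ _).linear_image T.toLinearMap).closure
  have hUmem (g : G) : U g v ∈ closure (T '' orbitHull G f) := by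
    have hmaps : MapsTo (U g) (T '' orbitHull G f) (T '' orbitHull G f) := by
      rintro _ ⟨u, hu, rfl⟩
      exact ⟨translateHom g u, translateHom_mem_orbitHull g hu, rfl⟩
    exact hmaps.closure (Lp.isometry_compMeasurePreserving _).continuous hv
  have hinv (g : G) : (fun x => v (g • x)) =ᵐ[μ] v := by
    have hcoe := Lp.coeFn_compMeasurePreserving v (measurePreserving_smul g μ)
    have hfix : U g v = v := hmin _ (hUmem g) (Lp.norm_compMeasurePreserving v _).le
    exact hcoe.symm.trans (.of_eq (congrArg (fun w : Lp ℝ 2 μ => ⇑w) hfix))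
  obtain ⟨c, hc⟩ := exists_ae_eq_const_of_forall_comp_smul (G := G)
    (Lp.stronglyMeasurable v).measurable hinv
  refine ⟨c, ?_⟩
  have hTc : T (ContinuousMap.const X c) = v :=
    Lp.ext ((ContinuousMap.coeFn_toLp μ _).trans hc.symm)
  rwa [hTc]

theorem exists_mem_orbitHull_variance_lt [IsProbabilityMeasure μ] [ErgodicSMul G X μ]
    (f : C(X, ℝ)) {ε : ℝ} (hε : 0 < ε) : ∃ u ∈ orbitHull G f, Var[u; μ] < ε := by
  obtain ⟨c, hc⟩ := exists_const_mem_closure_toLp_orbitHull (G := G) (μ := μ) f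
  obtain ⟨_, ⟨u, hu, rfl⟩, hdist⟩ := Metric.mem_closure_iff.1 hc (√ε) (Real.sqrt_pos.2 hε)
  refine ⟨u, hu, (variance_le_norm_toLp_sub_const_sq u c).trans_lt ?_⟩
  rwa [dist_comm, dist_eq_norm, ← map_sub, Real.lt_sqrt (norm_nonneg _)] at hdist

end MeanErgodic

/-! ### Uniform ergodic averages -/

section Average

open Filter Topology ProbabilityTheory

/-- The filter of finite subsets of `G` generated by the sets of nonempty `(K, δ)`-invariant sets,
so that convergence along it is convergence of averages over increasingly invariant sets. -/
def folnerFilter (G : Type*) [Group G] : Filter (Finset G) where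
  sets := {A | ∃ (K : Finset G) (δ : ℝ), 0 < δ ∧
    ∀ F : Finset G, F.Nonempty → FolnerInv G K δ F → F ∈ A}
  univ_sets := ⟨∅, 1, one_pos, fun _ _ _ => mem_univ _⟩
  sets_of_superset := fun ⟨K, δ, hδ, h⟩ hAB => ⟨K, δ, hδ, fun F hF hFol => hAB (h F hF hFol)⟩
  inter_sets := by
    classical
    rintro A B ⟨K, δ, hδ, hA⟩ ⟨K', δ', hδ', hB⟩
    exact ⟨K ∪ K', min δ δ', lt_min hδ hδ', fun F hF hFol =>
      ⟨hA F hF (hFol.mono Finset.subset_union_left (min_le_left _ _)),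
        hB F hF (hFol.mono Finset.subset_union_right (min_le_right _ _))⟩⟩

theorem AmenableGroup.folnerFilter_neBot {G : Type*} [Group G] (hG : AmenableGroup G) :
    (folnerFilter G).NeBot := by
  refine forall_mem_nonempty_iff_neBot.1 ?_
  rintro A ⟨K, δ, hδ, h⟩
  obtain ⟨S, hS, hFol⟩ := hG K δ hδ
  exact ⟨S, h S hS hFol⟩

theorem eventually_nonempty_folnerFilter {G : Type*} [Group G] :
    ∀ᶠ F in folnerFilter G, F.Nonempty :=
  ⟨∅, 1, one_pos, fun _ hF _ => hF⟩

theorem eventually_folnerInv {G : Type*} [Group G] (K : Finset G) {δ : ℝ} (hδ : 0 < δ) :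
    ∀ᶠ F in folnerFilter G, FolnerInv G K δ F :=
  ⟨K, δ, hδ, fun _ _ hF => hF⟩

theorem norm_sum_sub_sum_le {ι E : Type*} [DecidableEq ι] [SeminormedAddCommGroup E]
    {φ : ι → E} {C : ℝ} (hφ : ∀ i, ‖φ i‖ ≤ C) (A B : Finset ι) :
    ‖∑ i ∈ A, φ i - ∑ i ∈ B, φ i‖ ≤ ((A \ B).card + (B \ A).card) * C := by
  have hle (D : Finset ι) : ‖∑ i ∈ D, φ i‖ ≤ D.card * C := by
    simpa using norm_sum_le_of_le D fun i _ => hφ i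
  rw [← Finset.sum_sdiff_sub_sum_sdiff, add_mul]
  exact (norm_sub_le _ _).trans (add_le_add (hle _) (hle _))

variable {G X : Type*} [Group G] [MulAction G X] [MetricSpace X] [ContinuousConstSMul G X]

/-- The average of the translates of a function by the elements of `F`. -/
noncomputable def translateAverage (F : Finset G) : C(X, ℝ) →ₗ[ℝ] C(X, ℝ) :=
  (F.card : ℝ)⁻¹ • ∑ s ∈ F, (translateHom s).toLinearMap

theorem translateAverage_apply (F : Finset G) (u : C(X, ℝ)) :
    translateAverage F u = (F.card : ℝ)⁻¹ • ∑ s ∈ F, translateHom s u := by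
  simp only [translateAverage, LinearMap.smul_apply, LinearMap.sum_apply, AlgHom.toLinearMap_apply]

theorem translateAverage_sq_le (F : Finset G) (u : C(X, ℝ)) :
    translateAverage F u ^ 2 ≤ translateAverage F (u ^ 2) := by
  refine ContinuousMap.le_def.2 fun x => ?_
  have happly (v : C(X, ℝ)) : translateAverage F v x = (∑ s ∈ F, v (s • x)) / F.card := by
    simp only [translateAverage_apply, ContinuousMap.smul_apply, ContinuousMap.sum_apply,
      translateHom_apply, smul_eq_mul, inv_mul_eq_div]
  simpa only [happly, ContinuousMap.pow_apply] using
    sum_div_card_sq_le_sum_sq_div_card (s := F) (f := fun s => u (s • x))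

variable [CompactSpace X]

theorem norm_translateHom_le (g : G) (f : C(X, ℝ)) : ‖translateHom g f‖ ≤ ‖f‖ :=
  (ContinuousMap.norm_le _ (norm_nonneg _)).2 fun x => f.norm_coe_le_norm (g • x)

theorem norm_translateAverage_translateHom_sub_le {g : G} {F : Finset G} {δ : ℝ}
    (hF : FolnerInv G {g} δ F) (hne : F.Nonempty) (f : C(X, ℝ)) :
    ‖translateAverage F (translateHom g f) - translateAverage F f‖ ≤ 2 * δ * ‖f‖ := by
  classical
  have hcard : (0 : ℝ) < F.card := by exact_mod_cast hne.card_pos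
  have hsum : ∑ s ∈ F, translateHom s (translateHom g f) =
      ∑ s ∈ {g} * F, translateHom s f := by
    rw [Finset.singleton_mul, Finset.smul_finset_def,
      Finset.sum_image (MulAction.injective g).injOn]
    simp only [translateHom_translateHom, smul_eq_mul]
  have hsdiff : ((({g} * F) \ F).card : ℝ) ≤ δ * F.card := by
    simpa using hF.card_mul_sdiff_le
  have hsdiff' : (F \ ({g} * F)).card = (({g} * F) \ F).card :=
    Finset.card_sdiff_comm (by rw [Finset.singleton_mul, Finset.card_smul_finset])
  rw [translateAverage_apply, translateAverage_apply, ← smul_sub, norm_smul, norm_inv,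
    Real.norm_of_nonneg hcard.le, inv_mul_le_iff₀ hcard, hsum]
  calc _ ≤ ((({g} * F) \ F).card + (F \ ({g} * F)).card) * ‖f‖ :=
        norm_sum_sub_sum_le (fun s => norm_translateHom_le s f) _ _
    _ ≤ (δ * F.card + δ * F.card) * ‖f‖ := by rw [hsdiff']; gcongr
    _ = F.card * (2 * δ * ‖f‖) := by ring

theorem tendsto_translateAverage_translateHom_sub (g : G) (f : C(X, ℝ)) :
    Tendsto (fun F => translateAverage F (translateHom g f) - translateAverage F f)
      (folnerFilter G) (𝓝 0) := by
  rw [NormedAddGroup.tendsto_nhds_zero]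
  intro ε hε
  have hδ : 0 < ε / (2 * ‖f‖ + 1) := by positivity
  filter_upwards [eventually_nonempty_folnerFilter, eventually_folnerInv {g} hδ] with F hne hF
  refine (norm_translateAverage_translateHom_sub_le hF hne f).trans_lt ?_
  calc 2 * (ε / (2 * ‖f‖ + 1)) * ‖f‖ = ε / (2 * ‖f‖ + 1) * (2 * ‖f‖) := by ring
    _ < ε / (2 * ‖f‖ + 1) * (2 * ‖f‖ + 1) := by gcongr; linarith
    _ = ε := by field_simp

theorem tendsto_translateAverage_sub_of_mem_orbitHull {f u : C(X, ℝ)} (hu : u ∈ orbitHull G f) :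
    Tendsto (fun F => translateAverage F u - translateAverage F f) (folnerFilter G) (𝓝 0) := by
  have hconv : Convex ℝ {u : C(X, ℝ) |
      Tendsto (fun F => translateAverage F u - translateAverage F f) (folnerFilter G) (𝓝 0)} := by
    intro u hu v hv a b _ _ hab
    have hcomb (F : Finset G) : translateAverage F (a • u + b • v) - translateAverage F f =
        a • (translateAverage F u - translateAverage F f) +
          b • (translateAverage F v - translateAverage F f) := by
      rw [map_add, map_smul, map_smul, smul_sub, smul_sub, sub_add_sub_comm, ← add_smul, hab,
        one_smul]
    simpa only [mem_ofPred_eq, hcomb, smul_zero, add_zero] using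
      (Tendsto.const_smul hu a).add (Tendsto.const_smul hv b)
  refine convexHull_min ?_ hconv hu
  rintro _ ⟨g, rfl⟩
  exact tendsto_translateAverage_translateHom_sub g f

variable [MeasurableSpace X] [BorelSpace X] {μ : Measure X}

theorem integral_translateAverage [IsFiniteMeasure μ] [SMulInvariantMeasure G X μ] {F : Finset G}
    (hF : F.Nonempty) (u : C(X, ℝ)) : ∫ x, translateAverage F u x ∂μ = ∫ x, u x ∂μ := by
  have hcard : (F.card : ℝ) ≠ 0 := by exact_mod_cast hF.card_ne_zero
  simp only [translateAverage_apply, ContinuousMap.smul_apply, ContinuousMap.sum_apply, smul_eq_mul]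
  rw [integral_const_mul, integral_finsetSum _ fun s _ => integrable_continuousMap _ μ]
  simp only [integral_translateHom, Finset.sum_const, nsmul_eq_mul]
  exact inv_mul_cancel_left₀ hcard _

theorem memLp_continuousMap [IsFiniteMeasure μ] (u : C(X, ℝ)) : MemLp u 2 μ :=
  (BoundedContinuousFunction.mkOfCompact u).memLp_top.mono_exponent le_top

theorem variance_continuousMap [IsProbabilityMeasure μ] (u : C(X, ℝ)) :
    Var[u; μ] = ∫ x, (u ^ 2) x ∂μ - (∫ x, u x ∂μ) ^ 2 :=
  variance_eq_sub (memLp_continuousMap u)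

theorem variance_translateAverage_le [IsProbabilityMeasure μ] [SMulInvariantMeasure G X μ]
    {F : Finset G} (hF : F.Nonempty) (u : C(X, ℝ)) : Var[translateAverage F u; μ] ≤ Var[u; μ] := by
  rw [variance_continuousMap, variance_continuousMap, integral_translateAverage hF,
    ← integral_translateAverage hF (u ^ 2)]
  gcongr
  · exact integrable_continuousMap _ μ
  · exact integrable_continuousMap _ μ
  · exact ContinuousMap.le_def.1 (translateAverage_sq_le F u)

theorem continuous_variance (u : C(X, ℝ)) :
    Continuous fun μ : ProbabilityMeasure X => Var[u; (μ : Measure X)] := by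
  simp only [variance_continuousMap]
  have hcont (v : C(X, ℝ)) : Continuous fun μ : ProbabilityMeasure X => ∫ x, v x ∂(μ : Measure X) :=
    (continuous_apply v).comp continuous_integralFunctional
  exact (hcont _).sub ((hcont u).pow 2)

theorem measureReal_ge_le_variance_div_sq [IsProbabilityMeasure μ] (u : C(X, ℝ)) {c : ℝ}
    (hc : 0 < c) : μ.real {x | c ≤ |u x - ∫ y, u y ∂μ|} ≤ Var[u; μ] / c ^ 2 :=
  ENNReal.toReal_le_of_le_ofReal (div_nonneg (variance_nonneg _ _) (sq_nonneg c))
    (meas_ge_le_variance_div_sq (memLp_continuousMap u) hc)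

theorem exists_finite_subset_orbitHull_variance_lt [Countable G] (hcpt : IsCompact (EG G X))
    (f : C(X, ℝ)) {ε : ℝ} (hε : 0 < ε) :
    ∃ t ⊆ orbitHull G f, t.Finite ∧ ∀ μ ∈ EG G X, ∃ u ∈ t, Var[u; (μ : Measure X)] < ε := by
  have hcover : EG G X ⊆ ⋃ u ∈ orbitHull G f, {μ | Var[u; (μ : Measure X)] < ε} := by
    intro μ hμ
    have := ergodicSMul_of_mem_EG hμ
    obtain ⟨u, hu, hvar⟩ := exists_mem_orbitHull_variance_lt (G := G) (μ := μ) f hε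
    exact mem_biUnion hu hvar
  obtain ⟨t, ht, hfin, hsub⟩ := hcpt.elim_finite_subcover_image
    (fun u _ => isOpen_lt (continuous_variance u) continuous_const) hcover
  exact ⟨t, ht, hfin, fun μ hμ => by simpa using hsub hμ⟩

theorem exists_continuousMap_measureReal_ge_abs_sub_integral_lt [Countable G]
    (hG : AmenableGroup G) (hcpt : IsCompact (EG G X)) (f : C(X, ℝ)) {ε : ℝ} (hε : 0 < ε) :
    ∃ g : C(X, ℝ), ∀ μ ∈ EG G X,
      (μ : Measure X).real {x | ε ≤ |g x - ∫ y, f y ∂(μ : Measure X)|} < ε := by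
  obtain ⟨t, ht, hfin, hvar⟩ := exists_finite_subset_orbitHull_variance_lt hcpt f
    (ε := ε * (ε / 2) ^ 2) (by positivity)
  have := hG.folnerFilter_neBot
  have hclose : ∀ᶠ F in folnerFilter G, ∀ u ∈ t,
      ‖translateAverage F u - translateAverage F f‖ < ε / 2 :=
    (eventually_all_finite hfin).2 fun u hu => NormedAddGroup.tendsto_nhds_zero.1
      (tendsto_translateAverage_sub_of_mem_orbitHull (ht hu)) _ (half_pos hε)
  obtain ⟨F, hF, hFt⟩ := (eventually_nonempty_folnerFilter.and hclose).exists
  refine ⟨translateAverage F f, fun μ hμ => ?_⟩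
  have := ergodicSMul_of_mem_EG hμ
  obtain ⟨u, hu, huvar⟩ := hvar μ hμ
  have hint : ∫ x, translateAverage F u x ∂(μ : Measure X) = ∫ x, f x ∂(μ : Measure X) :=
    (integral_translateAverage hF u).trans (integral_eq_of_mem_orbitHull (ht hu))
  have hsub : {x | ε ≤ |translateAverage F f x - ∫ y, f y ∂(μ : Measure X)|} ⊆
      {x | ε / 2 ≤ |translateAverage F u x - ∫ y, translateAverage F u y ∂(μ : Measure X)|} := by
    intro x hx
    have hx' := (ContinuousMap.norm_coe_le_norm
      (translateAverage F u - translateAverage F f) x).trans_lt (hFt u hu)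
    rw [ContinuousMap.sub_apply, Real.norm_eq_abs, abs_sub_comm] at hx'
    rw [mem_ofPred_eq] at hx ⊢
    rw [hint]
    linarith [abs_sub_le (translateAverage F f x) (translateAverage F u x)
      (∫ y, f y ∂(μ : Measure X))]
  calc _ ≤ _ := measureReal_mono hsub
    _ ≤ Var[translateAverage F u; (μ : Measure X)] / (ε / 2) ^ 2 :=
        measureReal_ge_le_variance_div_sq _ (half_pos hε)
    _ ≤ Var[u; (μ : Measure X)] / (ε / 2) ^ 2 := by gcongr; exact variance_translateAverage_le hF u
    _ < ε := (div_lt_iff₀ (by positivity)).2 huvar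

end Average

/-! ### Functions of the measure approximable by functions of the point -/

section Approximable

open Filter Topology

variable {X : Type*} [TopologicalSpace X] [MeasurableSpace X] {E : Set (ProbabilityMeasure X)}

/-- A function `h` of the measure `μ ∈ E` is approximable in measure if some continuous function
on `X` is, uniformly in `μ ∈ E`, close in `μ`-measure to the constant `h μ`. -/
def IsApproximableInMeasure (h : E → ℝ) : Prop :=
  ∀ ε : ℝ, 0 < ε → ∃ f : C(X, ℝ), ∀ μ : E, (μ.1 : Measure X).real {x | ε ≤ |f x - h μ|} < ε

theorem isApproximableInMeasure_const (c : ℝ) :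
    IsApproximableInMeasure fun _ : E => c :=
  fun ε hε => ⟨.const X c, fun _ => by simp [hε, hε.not_ge]⟩

theorem isApproximableInMeasure_of_forall_dist_lt {h : E → ℝ}
    (hh : ∀ ε : ℝ, 0 < ε → ∃ k, IsApproximableInMeasure k ∧ ∀ μ, dist (h μ) (k μ) < ε) :
    IsApproximableInMeasure h := by
  intro ε hε
  obtain ⟨k, hk, hdist⟩ := hh (ε / 2) (half_pos hε)
  obtain ⟨f, hf⟩ := hk (ε / 2) (half_pos hε)
  refine ⟨f, fun μ => (measureReal_mono fun x hx => ?_).trans_lt ((hf μ).trans (half_lt_self hε))⟩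
  have hd := hdist μ
  rw [dist_comm, Real.dist_eq] at hd
  rw [mem_ofPred_eq] at hx ⊢
  linarith [abs_sub_le (f x) (k μ) (h μ)]

theorem IsApproximableInMeasure.comp₂ [OpensMeasurableSpace X] [CompactSpace E] {h k : C(E, ℝ)}
    (hh : IsApproximableInMeasure h) (hk : IsApproximableInMeasure k) {Φ : ℝ × ℝ → ℝ}
    (hΦ : Continuous Φ) : IsApproximableInMeasure fun μ => Φ (h μ, k μ) := by
  intro ε hε
  obtain ⟨δ, hδ, hclose⟩ := Metric.mem_uniformity_dist.1 <|
    (isCompact_range (h.prodMk k).continuous).uniformContinuousAt_of_continuousAt Φ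
      (fun _ _ => hΦ.continuousAt) (Metric.dist_mem_uniformity hε)
  let η := min δ (ε / 2)
  have hη : 0 < η := lt_min hδ (half_pos hε)
  obtain ⟨f, hf⟩ := hh η hη
  obtain ⟨g, hg⟩ := hk η hη
  refine ⟨⟨fun x => Φ (f x, g x), by fun_prop⟩, fun μ => ?_⟩
  have hsub : {x | ε ≤ |Φ (f x, g x) - Φ (h μ, k μ)|} ⊆
      {x | η ≤ |f x - h μ|} ∪ {x | η ≤ |g x - k μ|} := by
    intro x hx
    by_contra hc
    simp only [mem_union, mem_ofPred_eq, not_or, not_le] at hc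
    have hdist : dist (h μ, k μ) (f x, g x) < δ := by
      rw [dist_comm, Prod.dist_eq]
      exact max_lt (hc.1.trans_le (min_le_left _ _)) (hc.2.trans_le (min_le_left _ _))
    rw [mem_ofPred_eq, ← not_lt, ← Real.dist_eq, dist_comm] at hx
    exact hx (hclose hdist (mem_range_self μ))
  calc _ ≤ _ := measureReal_mono hsub
    _ ≤ _ := measureReal_union_le _ _
    _ < η + η := add_lt_add (hf μ) (hg μ)
    _ ≤ ε / 2 + ε / 2 := add_le_add (min_le_right _ _) (min_le_right _ _)
    _ = ε := add_halves ε

/-- The approximable functions form an algebra, so Stone–Weierstrass applies. -/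
theorem isApproximableInMeasure_of_integral [BorelSpace X] [CompactSpace X]
    [HasOuterApproxClosed X] [CompactSpace E]
    (hE : ∀ f : C(X, ℝ), IsApproximableInMeasure fun μ : E => ∫ x, f x ∂(μ.1 : Measure X))
    (h : C(E, ℝ)) : IsApproximableInMeasure h := by
  let L : Subalgebra ℝ C(E, ℝ) :=
    { carrier := {h | IsApproximableInMeasure h}
      mul_mem' := fun ha hb => ha.comp₂ hb continuous_mul
      add_mem' := fun ha hb => ha.comp₂ hb continuous_add
      algebraMap_mem' := isApproximableInMeasure_const }
  have hsep : L.SeparatesPoints := by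
    intro μ ν hne
    obtain ⟨f, hf⟩ := Function.ne_iff.1 <|
      integralFunctional_injective.ne (Subtype.coe_injective.ne hne)
    exact ⟨_, ⟨⟨fun μ => integralFunctional μ.1 f, (continuous_apply f).comp
      (continuous_integralFunctional.comp continuous_subtype_val)⟩, hE f, rfl⟩, hf⟩
  have hmem : h ∈ closure (L : Set C(E, ℝ)) := by
    rw [← Subalgebra.topologicalClosure_coe,
      ContinuousMap.subalgebra_topologicalClosure_eq_top_of_separatesPoints L hsep]
    exact mem_univ h
  refine isApproximableInMeasure_of_forall_dist_lt fun ε hε => ?_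
  obtain ⟨k, hk, hdist⟩ := Metric.mem_closure_iff.1 hmem ε hε
  exact ⟨k, hk, fun μ => (ContinuousMap.dist_apply_le_dist μ).trans_lt hdist⟩

end Approximable

theorem isApproximableInMeasure_EG {G X : Type*} [Group G] [Countable G] [MetricSpace X]
    [CompactSpace X] [MeasurableSpace X] [BorelSpace X] [MulAction G X] [ContinuousConstSMul G X]
    (hG : AmenableGroup G) (hcpt : IsCompact (EG G X)) (h : C(EG G X, ℝ)) :
    IsApproximableInMeasure h := by
  have : CompactSpace (EG G X) := isCompact_iff_compactSpace.1 hcpt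
  refine isApproximableInMeasure_of_integral (fun f ε hε => ?_) h
  obtain ⟨g, hg⟩ := exists_continuousMap_measureReal_ge_abs_sub_integral_lt hG hcpt f hε
  exact ⟨g, fun μ => hg μ.1 μ.2⟩

/-! ### Gluing castles along a partition of the ergodic measures -/

section Gluing

variable {G : Type u} {X : Type*} [Group G] [MulAction G X]

/-- The part of the base `V` of a tower of shape `S` whose whole orbit segment stays in the region
where `F` is within `1 / 3` of `c`. -/
def cutBase (F : X → ℝ) (c : ℝ) (S : Finset G) (V : Set X) : Set X :=
  V ∩ {x | ∀ s ∈ S, |F (s • x) - c| < 1 / 3}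

theorem cutBase_subset {F : X → ℝ} {c : ℝ} {S : Finset G} {V : Set X} : cutBase F c S V ⊆ V :=
  inter_subset_left

theorem compl_footprint_cutBase_subset {ι : Type*} (F : X → ℝ) (c : ℝ) (S : ι → Finset G)
    (V : ι → Set X) :
    (footprint S fun i => cutBase F c (S i) (V i))ᶜ ⊆ (footprint S V)ᶜ ∪
      ⋃ i, ⋃ s ∈ S i, s • ⋃ t ∈ S i, t⁻¹ • {x | 1 / 3 ≤ |F x - c|} := by
  intro x hx
  refine or_iff_not_imp_left.2 fun hxV => ?_
  obtain ⟨i, s, hs, v, hv, rfl⟩ := mem_footprint.1 (not_not.1 hxV)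
  have hcut : v ∉ cutBase F c (S i) (V i) := fun h => hx (mem_footprint.2 ⟨i, s, hs, v, h, rfl⟩)
  obtain ⟨t, ht, hle⟩ : ∃ t ∈ S i, 1 / 3 ≤ |F (t • v) - c| := by
    by_contra! h
    exact hcut ⟨hv, h⟩
  exact mem_iUnion.2 ⟨i, mem_biUnion hs (smul_mem_smul_set
    (mem_biUnion ht (mem_inv_smul_set_iff.2 hle)))⟩

theorem measureReal_compl_footprint_cutBase_le [MeasurableSpace X] {ι : Type*} [Fintype ι]
    {μ : Measure X} [IsFiniteMeasure μ] [SMulInvariantMeasure G X μ] (F : X → ℝ) (c : ℝ)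
    (S : ι → Finset G) (V : ι → Set X) :
    μ.real (footprint S fun i => cutBase F c (S i) (V i))ᶜ ≤ μ.real (footprint S V)ᶜ +
      (∑ i, ((S i).card : ℝ) ^ 2) * μ.real {x | 1 / 3 ≤ |F x - c|} := by
  refine (measureReal_mono (compl_footprint_cutBase_subset F c S V)).trans <|
    (measureReal_union_le _ _).trans (add_le_add_right ?_ _)
  rw [Finset.sum_mul]
  refine (measureReal_iUnion_fintype_le _).trans (Finset.sum_le_sum fun i _ => ?_)
  rw [sq, mul_assoc]
  exact (measureReal_biUnion_smul_le _ id _).trans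
    (mul_le_mul_of_nonneg_left (measureReal_biUnion_smul_le _ _ _) (Nat.cast_nonneg _))

section Topology

variable [TopologicalSpace X] [ContinuousConstSMul G X] {F : X → ℝ} (hF : Continuous F) {c : ℝ}
  {S : Finset G} {V : Set X}

include hF

theorem isOpen_cutBase (hV : IsOpen V) : IsOpen (cutBase F c S V) := by
  simp only [cutBase, ofPred_forall]
  exact hV.inter (isOpen_biInter_finset fun s _ =>
    isOpen_lt (((hF.comp (continuous_const_smul s)).sub continuous_const).abs) continuous_const)

theorem abs_sub_le_of_mem_closure_cutBase {x : X} (hx : x ∈ closure (cutBase F c S V)) {s : G}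
    (hs : s ∈ S) : |F (s • x) - c| ≤ 1 / 3 :=
  closure_minimal (fun _ hy => (hy.2 s hs).le) (isClosed_le
    (((hF.comp (continuous_const_smul s)).sub continuous_const).abs) continuous_const) hx

end Topology

theorem IsOpenFolnerCastle.glue [MetricSpace X] [ContinuousConstSMul G X] [CompactSpace X]
    {κ : Type*} {ι : κ → Type*} {S : ∀ j, ι j → Finset G} {V : ∀ j, ι j → Set X} {K : Finset G}
    {δ : ℝ} (h : ∀ j, IsOpenFolnerCastle K δ (S j) (V j)) {F : X → ℝ} (hF : Continuous F)
    {c : κ → ℝ} (hc : Pairwise fun j j' => 2 / 3 < |c j - c j'|) :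
    IsOpenFolnerCastle K δ (fun p : Σ j, ι j => S p.1 p.2)
      fun p => cutBase F (c p.1) (S p.1 p.2) (V p.1 p.2) where
  isOpen p := isOpen_cutBase hF ((h p.1).isOpen p.2)
  isCastle_closure := by
    rintro ⟨j, i⟩ ⟨j', i'⟩ s hs t ht x hx y hy hxy
    have hxc := abs_sub_le_of_mem_closure_cutBase hF hx hs
    have hyc := abs_sub_le_of_mem_closure_cutBase hF hy ht
    obtain rfl : j = j' := by
      by_contra hne
      refine (hc hne).not_ge ((abs_sub_le _ (F (s • x)) _).trans ?_)
      rw [abs_sub_comm, hxy]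
      rw [hxy] at hxc
      linarith
    obtain ⟨rfl, rfl⟩ := (h j).isCastle_closure i i' s hs t ht x (closure_mono cutBase_subset hx)
      y (closure_mono cutBase_subset hy) hxy
    exact ⟨rfl, rfl⟩
  folnerInv p := (h p.1).folnerInv p.2
  diam_lt p s hs := (Metric.diam_mono (smul_set_mono (closure_mono cutBase_subset))
    (.all _)).trans_lt ((h p.1).diam_lt p.2 s hs)

end Gluing

theorem exists_isLocallyConstant_mem_of_isOpenCover {E ι : Type*} [TopologicalSpace E]
    [CompactSpace E] [T2Space E] [TotallyDisconnectedSpace E] {O : ι → TopologicalSpace.Opens E}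
    (hO : TopologicalSpace.IsOpenCover O) :
    ∃ (n : ℕ) (r : E → Fin n) (e : Fin n → ι), IsLocallyConstant r ∧ ∀ x, x ∈ O (e (r x)) := by
  obtain ⟨n, W, hW, hcover, hdisj⟩ := hO.exists_finite_nonempty_disjoint_clopen_cover
  choose e he using fun j => (hW j).2
  choose r hr using fun x => mem_iUnion.1 (hcover (mem_univ x))
  refine ⟨n, r, e, (IsLocallyConstant.iff_eventually_eq r).2 fun x => ?_, fun x => he _ (hr x)⟩
  filter_upwards [(W (r x)).isClopen.isOpen.mem_nhds (hr x)] with y hy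
  by_contra hne
  exact (TopologicalSpace.Clopens.coe_disjoint.2 (hdisj hne)).ne_of_mem (hr y) hy rfl

section Uniform

open Filter Topology

variable {G : Type u} {X : Type*} [Group G] [MetricSpace X] [CompactSpace X]
  [MeasurableSpace X] [BorelSpace X] [MulAction G X] [ContinuousConstSMul G X] {K : Finset G}
  {δ γ : ℝ}

theorem exists_isLocallyConstant_isOpenFolnerCastle (hG : AmenableGroup G)
    (hfree : FreeAction G X) (hcpt : IsCompact (EG G X)) (hzd : IsTotallyDisconnected (EG G X))
    (K : Finset G) (hδ : 0 < δ) (hδ1 : δ ≤ 1) (hγ : 0 < γ) :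
    ∃ (n : ℕ) (r : EG G X → Fin n) (ι : Fin n → Type u) (_ : ∀ j, Fintype (ι j))
      (S : ∀ j, ι j → Finset G) (V : ∀ j, ι j → Set X), IsLocallyConstant r ∧
      (∀ j, IsOpenFolnerCastle K δ (S j) (V j)) ∧
      ∀ μ, (μ.1 : Measure X).real (footprint (S (r μ)) (V (r μ)))ᶜ < γ := by
  have : CompactSpace (EG G X) := isCompact_iff_compactSpace.1 hcpt
  have : TotallyDisconnectedSpace (EG G X) := totallyDisconnectedSpace_subtype_iff.2 hzd
  have hlocal (μ : EG G X) : ∃ (ι : Type u) (_ : Fintype ι) (S : ι → Finset G) (V : ι → Set X),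
      IsOpenFolnerCastle K δ S V ∧ (μ.1 : Measure X).real (footprint S V)ᶜ < γ := by
    have := mem_MG_iff_smulInvariantMeasure.1 μ.2.1
    obtain ⟨ι, hι, S, V, h, hμ⟩ :=
      hG.exists_isOpenFolnerCastle hfree (μ.1 : Measure X) K hδ hδ1 hγ
    refine ⟨ι, hι, S, V, h, ?_⟩
    rw [probReal_compl_eq_one_sub (isOpen_footprint h.isOpen).measurableSet]
    linarith
  choose ι hι S V h hμ using hlocal
  let O (μ : EG G X) : TopologicalSpace.Opens (EG G X) :=
    ⟨{ν | (ν.1 : Measure X).real (footprint (S μ) (V μ))ᶜ < γ},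
      (upperSemicontinuous_iff_isOpen_preimage.1 (upperSemicontinuous_measureReal
        (isOpen_footprint (h μ).isOpen).isClosed_compl) γ).preimage continuous_subtype_val⟩
  have hO : TopologicalSpace.IsOpenCover O := .mk <| eq_top_iff.2 fun μ _ =>
    TopologicalSpace.Opens.mem_iSup.2 ⟨μ, hμ μ⟩
  obtain ⟨n, r, e, hr, hre⟩ := exists_isLocallyConstant_mem_of_isOpenCover hO
  exact ⟨n, r, fun j => ι (e j), fun j => hι (e j), fun j => S (e j), fun j => V (e j), hr,
    fun j => h (e j), hre⟩

theorem exists_continuousMap_measureReal_compl_footprint_cutBase_lt [Countable G]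
    (hG : AmenableGroup G) (hcpt : IsCompact (EG G X)) {n : ℕ} {r : EG G X → Fin n}
    (hr : IsLocallyConstant r) {ι : Fin n → Type*} [∀ j, Finite (ι j)]
    {S : ∀ j, ι j → Finset G} {V : ∀ j, ι j → Set X}
    (hγ : 0 < γ)
    (hV : ∀ μ, (μ.1 : Measure X).real (footprint (S (r μ)) (V (r μ)))ᶜ < γ / 2) :
    ∃ F : C(X, ℝ), ∀ μ ∈ EG G X, (μ : Measure X).real (footprint (fun p : Σ j, ι j => S p.1 p.2)
      fun p => cutBase F (p.1 : ℕ) (S p.1 p.2) (V p.1 p.2))ᶜ < γ := by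
  have (j : Fin n) := Fintype.ofFinite (ι j)
  let m (j : Fin n) : ℝ := ∑ i, ((S j i).card : ℝ) ^ 2
  have hm (j : Fin n) : 0 ≤ m j := Finset.sum_nonneg fun i _ => sq_nonneg _
  have hsmall : ∀ᶠ ε in 𝓝 (0 : ℝ), ε < 1 / 3 ∧ ∀ j, m j * ε < γ / 2 :=
    (eventually_lt_nhds (by norm_num)).and <| eventually_all.2 fun j =>
      ((continuous_const_mul (m j)).tendsto' 0 0 (mul_zero _)).eventually_lt_const (half_pos hγ)
  obtain ⟨ε, ⟨hε', hmε⟩, hε⟩ : ∃ ε, (ε < 1 / 3 ∧ ∀ j, m j * ε < γ / 2) ∧ 0 < ε :=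
    ((hsmall.filter_mono nhdsWithin_le_nhds).and (eventually_mem_nhdsWithin (s := Ioi 0))).exists
  obtain ⟨F, hF⟩ := isApproximableInMeasure_EG hG hcpt
    ⟨fun μ => ((r μ : ℕ) : ℝ), (hr.comp fun j => ((j : ℕ) : ℝ)).continuous⟩ ε hε
  refine ⟨F, fun μ hμ => ?_⟩
  have := mem_MG_iff_smulInvariantMeasure.1 hμ.1
  let j := r ⟨μ, hμ⟩
  have hsub : (footprint (fun p : Σ j, ι j => S p.1 p.2)
      fun p => cutBase F (p.1 : ℕ) (S p.1 p.2) (V p.1 p.2))ᶜ ⊆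
      (footprint (S j) fun i => cutBase F (j : ℕ) (S j i) (V j i))ᶜ :=
    compl_subset_compl.2 (iUnion_subset fun i => subset_iUnion_of_subset ⟨j, i⟩ subset_rfl)
  have hbad : (μ : Measure X).real {x | 1 / 3 ≤ |F x - (j : ℕ)|} ≤ ε :=
    (measureReal_mono fun x (hx : _ ≤ _) => hε'.le.trans hx).trans (hF ⟨μ, hμ⟩).le
  calc _ ≤ _ := measureReal_mono hsub
    _ ≤ (μ : Measure X).real (footprint (S j) (V j))ᶜ +
          m j * (μ : Measure X).real {x | 1 / 3 ≤ |F x - (j : ℕ)|} :=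
        measureReal_compl_footprint_cutBase_le F _ (S j) (V j)
    _ ≤ (μ : Measure X).real (footprint (S j) (V j))ᶜ + m j * ε :=
        add_le_add_right (mul_le_mul_of_nonneg_left hbad (hm j)) _
    _ < γ / 2 + γ / 2 := add_lt_add (hV ⟨μ, hμ⟩) (hmε j)
    _ = γ := add_halves γ

theorem exists_isOpenFolnerCastle_forall_mem_MG [Countable G] (hG : AmenableGroup G)
    (hfree : FreeAction G X) (hcpt : IsCompact (EG G X)) (hzd : IsTotallyDisconnected (EG G X))
    (K : Finset G) (hδ : 0 < δ) (hδ1 : δ ≤ 1) (hγ : 0 < γ) :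
    ∃ (ι : Type u) (_ : Fintype ι) (S : ι → Finset G) (V : ι → Set X),
      IsOpenFolnerCastle K δ S V ∧ ∀ μ ∈ MG G X, (μ : Measure X).real (footprint S V)ᶜ < γ := by
  obtain ⟨n, r, ι, _, S, V, hr, h, hV⟩ :=
    exists_isLocallyConstant_isOpenFolnerCastle hG hfree hcpt hzd K hδ hδ1 (half_pos hγ)
  obtain ⟨F, hF⟩ := exists_continuousMap_measureReal_compl_footprint_cutBase_lt hG hcpt hr hγ hV
  have hlabel : Pairwise fun j j' : Fin n => (2 : ℝ) / 3 < |((j : ℕ) : ℝ) - (j' : ℕ)| := by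
    intro j j' hne
    rw [← Nat.dist_eq]
    linarith [Nat.pairwise_one_le_dist (Fin.val_injective.ne hne)]
  have hglue := IsOpenFolnerCastle.glue h F.continuous hlabel
  refine ⟨Σ j, ι j, inferInstance, _, _, hglue, fun μ hμ => ?_⟩
  obtain ⟨ν, hν, hle⟩ := exists_mem_EG_measureReal_le
    (isOpen_footprint (G := G) hglue.isOpen).isClosed_compl hμ
  exact hle.trans_lt (hF ν hν)

end Uniform

/-! ### Absorbing the remainder -/

section Subordination

variable {G X : Type*} [Group G] [MetricSpace X] [MulAction G X] {m : ℕ} {F O : Set X}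

theorem subordinateM_zero_of_finite {ι : Type*} [Finite ι] {U : ι → Set X} {s : ι → G}
    (hU : ∀ k, IsOpen (U k)) (hF : F ⊆ ⋃ k, U k) (hO : ∀ k, s k • U k ⊆ O)
    (hdisj : Pairwise fun k l => Disjoint (s k • U k) (s l • U l)) : SubordinateM G X 0 F O := by
  obtain ⟨n, ⟨e⟩⟩ := Finite.exists_equiv_fin ι
  exact ⟨n, fun i => U (e.symm i), fun i => s (e.symm i), 0, fun i => hU _,
    hF.trans (e.symm.surjective.iUnion_comp U).ge, fun i => hO _,
    fun k l hkl _ => hdisj (e.symm.injective.ne hkl)⟩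

/-- The sets of colour `c` in a subordination to the copies `g k 0 • B k` are moved to the copies
`g k c • B k`, which makes them disjoint from the sets of all other colours. -/
theorem SubordinateM.zero_of_copies [ContinuousConstSMul G X] {κ : Type*} [Finite κ]
    {B : κ → Set X} (hB : ∀ k, IsOpen (B k)) {g : κ → Fin (m + 1) → G}
    (hdisj : Pairwise fun p q : κ × Fin (m + 1) => Disjoint (g p.1 p.2 • B p.1) (g q.1 q.2 • B q.1))
    (hO : ∀ k c, g k c • B k ⊆ O) (h : SubordinateM G X m F (⋃ k, g k 0 • B k)) :
    SubordinateM G X 0 F O := by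
  obtain ⟨n, U, s, c, hU, hFU, hsU, hsdisj⟩ := h
  let W (p : Fin n × κ) : Set X := U p.1 ∩ (s p.1 • ·) ⁻¹' (g p.2 0 • B p.2)
  let r (p : Fin n × κ) : G := g p.2 (c p.1) * (g p.2 0)⁻¹
  have hW₁ (p) : s p.1 • W p ⊆ s p.1 • U p.1 := smul_set_mono inter_subset_left
  have hW₂ (p) : (r p * s p.1) • W p ⊆ g p.2 (c p.1) • B p.2 := by
    have hsW : s p.1 • W p ⊆ g p.2 0 • B p.2 := by
      rintro _ ⟨x, hx, rfl⟩
      exact hx.2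
    simpa only [r, smul_smul, inv_mul_cancel_right] using smul_set_mono (a := r p) hsW
  refine subordinateM_zero_of_finite (U := W) (s := fun p => r p * s p.1) (fun p => ?_) ?_
    (fun p => (hW₂ p).trans (hO _ _)) fun p q hpq => ?_
  · exact (hU _).inter (((hB _).smul _).preimage (continuous_const_smul _))
  · intro x hx
    obtain ⟨i, hi⟩ := mem_iUnion.1 (hFU hx)
    obtain ⟨k, hk⟩ := mem_iUnion.1 (hsU i (smul_mem_smul_set hi))
    exact mem_iUnion.2 ⟨(i, k), hi, hk⟩
  · by_cases heq : (p.2, c p.1) = (q.2, c q.1)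
    · obtain ⟨hk, hc⟩ := Prod.mk.inj heq
      have hr : r p = r q := by simp only [r, hk, hc]
      simp only [hr, mul_smul]
      rw [disjoint_smul_set]
      exact (hsdisj _ _ (fun hi => hpq (Prod.ext hi hk)) hc).mono (hW₁ p) (hW₁ q)
    · exact (hdisj heq).mono (hW₂ p) (hW₂ q)

end Subordination

section Absorption

variable {G : Type u} {X ι : Type*} [Group G] [MulAction G X] {S : ι → Finset G} {V : ι → Set X}
  {p : ℕ}

theorem exists_embedding_mem_of_card_le {α κ : Type*} [Fintype κ] {T : Finset α}
    (h : Fintype.card κ ≤ T.card) : ∃ φ : κ ↪ α, ∀ z, φ z ∈ T := by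
  obtain ⟨ψ⟩ := Function.Embedding.nonempty_of_card_le (h.trans_eq (Fintype.card_coe T).symm)
  exact ⟨ψ.trans (.subtype _), fun z => (ψ z).2⟩

theorem le_two_mul_mul_div {k : ℕ} (hp : 0 < p) (hk : p ≤ k) : k ≤ 2 * p * (k / p) := by
  have hdiv : 1 ≤ k / p := (Nat.one_le_div_iff hp).2 hk
  have hlt := Nat.lt_mul_div_succ k hp
  nlinarith

theorem IsCastle.lt_measureReal_iUnion_smul [MeasurableSpace X] [MeasurableConstSMul G X]
    {μ : Measure X} [IsProbabilityMeasure μ] [SMulInvariantMeasure G X μ] [Finite ι]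
    (h : IsCastle S V) (hV : ∀ i, MeasurableSet (V i)) (hp : 0 < p)
    (hS : ∀ i, (S i).Nonempty → p ≤ (S i).card) {φ : ∀ i, Fin ((S i).card / p) ↪ G}
    (hφ : ∀ i a, φ i a ∈ S i) (hμ : μ.real (footprint S V)ᶜ < 1 / (2 * p + 1)) :
    1 / (2 * p + 1) < μ.real (⋃ k : Σ i, Fin ((S i).card / p), φ k.1 k.2 • V k.1) := by
  have := Fintype.ofFinite ι
  have hinj : Function.Injective fun k : Σ i, Fin ((S i).card / p) => (k.1, φ k.1 k.2) := by
    rintro ⟨i, a⟩ ⟨j, b⟩ hab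
    obtain ⟨hij, hab⟩ : i = j ∧ φ i a = φ j b := Prod.mk.inj hab
    subst hij
    rw [(φ i).injective hab]
  have hmem (k : Σ i, Fin ((S i).card / p)) : φ k.1 k.2 ∈ S k.1 := hφ k.1 k.2
  have hcopies : μ.real (⋃ k : Σ i, Fin ((S i).card / p), φ k.1 k.2 • V k.1) =
      ∑ i, ((S i).card / p : ℕ) * μ.real (V i) := by
    rw [h.measureReal_iUnion_smul hV hmem hinj]
    simp only [Fintype.sum_sigma, Finset.sum_const, Finset.card_univ, Fintype.card_fin,
      nsmul_eq_mul]
  have hcard (i) : ((S i).card : ℝ) ≤ 2 * p * ((S i).card / p : ℕ) := by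
    rcases (S i).eq_empty_or_nonempty with hi | hi
    · simp [hi]
    · exact_mod_cast le_two_mul_mul_div hp (hS i hi)
  have hle : μ.real (footprint S V) ≤
      2 * p * ∑ i, ((S i).card / p : ℕ) * μ.real (V i) := by
    rw [h.measureReal_footprint hV, Finset.mul_sum]
    refine Finset.sum_le_sum fun i _ => ?_
    rw [← mul_assoc]
    exact mul_le_mul_of_nonneg_right (hcard i) measureReal_nonneg
  rw [probReal_compl_eq_one_sub (measurableSet_footprint hV)] at hμ
  rw [hcopies]
  have hp' : (0 : ℝ) < 2 * p := by positivity
  have hγ : 2 * p * (1 / (2 * p + 1)) = 1 - 1 / (2 * p + 1 : ℝ) := by field_simp; ring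
  exact lt_of_mul_lt_mul_left (by linarith) hp'.le

theorem IsCastle.disjoint_copies {C : Type*} {κ : ι → Type*} (h : IsCastle S V)
    {φ : ∀ i, C × κ i ↪ G} (hφ : ∀ i z, φ i z ∈ S i) :
    Pairwise fun x y : (Σ i, κ i) × C =>
      Disjoint (φ x.1.1 (x.2, x.1.2) • V x.1.1) (φ y.1.1 (y.2, y.1.2) • V y.1.1) := by
  rintro ⟨⟨i, a⟩, c⟩ ⟨⟨j, b⟩, d⟩ hne
  refine h.disjoint_levels (hφ i _) (hφ j _) ?_
  rintro ⟨hij, hab⟩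
  subst hij
  obtain ⟨rfl, rfl⟩ := Prod.mk.inj ((φ i).injective hab)
  exact hne rfl

theorem IsCastle.exists_subordinateM_zero_of_hasMComparison [MetricSpace X] [MeasurableSpace X]
    [BorelSpace X] [ContinuousConstSMul G X] [Finite ι] (h : IsCastle S V)
    (hV : ∀ i, IsOpen (V i)) {m n : ℕ} (hcomp : HasMComparison G X m) (hn : 1 ≤ n)
    (hS : ∀ i, (S i).Nonempty → n * (m + 1) ≤ (S i).card)
    (hμ : ∀ μ ∈ MG G X, (μ : Measure X).real (footprint S V)ᶜ < 1 / (2 * (n * (m + 1) : ℕ) + 1)) :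
    ∃ S' : ι → Finset G, (∀ i, S' i ⊆ S i) ∧ (∀ i, ((S' i).card : ℝ) ≤ (S i).card / n) ∧
      SubordinateM G X 0 (footprint S V)ᶜ (footprint S' V) := by
  obtain ⟨p, hp⟩ : ∃ p, p = n * (m + 1) := ⟨_, rfl⟩
  have hp0 : 0 < p := hp ▸ Nat.mul_pos hn m.succ_pos
  rw [← hp] at hS hμ
  have hcard (i) : n * ((m + 1) * ((S i).card / p)) ≤ (S i).card := by
    rw [← mul_assoc, ← hp]
    exact Nat.mul_div_le _ _
  choose φ hφ using fun i => exists_embedding_mem_of_card_le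
    (κ := Fin (m + 1) × Fin ((S i).card / p)) (T := S i) <| by
      simpa only [Fintype.card_prod, Fintype.card_fin] using
        (Nat.le_mul_of_pos_left _ hn).trans (hcard i)
  have hsub : SubordinateM G X m (footprint S V)ᶜ
      (⋃ k : Σ i, Fin ((S i).card / p), φ k.1 (0, k.2) • V k.1) := by
    refine hcomp _ _ (isOpen_footprint hV).isClosed_compl
      (isOpen_iUnion fun k => (hV k.1).smul _) fun μ hμG => ?_
    have := mem_MG_iff_smulInvariantMeasure.1 hμG
    have hlt := (hμ μ hμG).trans <| h.lt_measureReal_iUnion_smul (fun i => (hV i).measurableSet)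
      hp0 hS (φ := fun i => (Function.Embedding.sectR 0 _).trans (φ i))
      (fun i a => hφ i (0, a)) (hμ μ hμG)
    exact_mod_cast hlt
  refine ⟨fun i => Finset.univ.map (φ i), fun i g hg => ?_, fun i => ?_, ?_⟩
  · obtain ⟨z, -, rfl⟩ := Finset.mem_map.1 hg
    exact hφ i z
  · rw [le_div_iff₀' (by positivity)]
    simpa only [Finset.card_map, Finset.card_univ, Fintype.card_prod, Fintype.card_fin] using
      mod_cast hcard i
  · refine SubordinateM.zero_of_copies (κ := Σ i, Fin ((S i).card / p)) (B := fun k => V k.1)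
      (g := fun k c => φ k.1 (c, k.2)) (fun k => hV k.1) (h.disjoint_copies hφ) (fun k c => ?_) hsub
    exact (smul_set_subset_smul (Finset.mem_map_of_mem _ (Finset.mem_univ _))).trans
      (subset_iUnion (fun i => ((Finset.univ.map (φ i) : Finset G) : Set G) • V i) k.1)

end Absorption

section AlmostFinite

variable {G : Type u} {X : Type*} [Group G] [MetricSpace X] [MulAction G X]

theorem mAlmostFinite_zero_of_isOpenFolnerCastle
    (h : ∀ n : ℕ, 1 ≤ n → ∀ (K : Finset G) (δ : ℝ), 0 < δ →
      ∃ (ι : Type u) (_ : Finite ι) (S S' : ι → Finset G) (V : ι → Set X),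
        IsOpenFolnerCastle K δ S V ∧ (∀ i, S' i ⊆ S i) ∧
        (∀ i, ((S' i).card : ℝ) ≤ (S i).card / n) ∧
        SubordinateM G X 0 (footprint S V)ᶜ (footprint S' V)) :
    MAlmostFinite G X 0 := by
  intro n hn K δ hδ
  obtain ⟨ι, _, S, S', V, hcastle, hS', hcard, hsub⟩ := h n hn K δ hδ
  obtain ⟨I, ⟨e⟩⟩ := Finite.exists_equiv_fin ι
  rw [← footprint_comp_surjective e.symm.surjective,
    ← footprint_comp_surjective (S := S') e.symm.surjective, compl_eq_univ_sdiff] at hsub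
  have hfin := hcastle.comp_injective e.symm.injective
  exact ⟨I, S ∘ e.symm, V ∘ e.symm, 0, S' ∘ e.symm, hfin.isOpen,
    fun i s hs t ht hst => hfin.isCastle_closure.disjoint_levels hs ht fun h => hst h.2,
    hfin.folnerInv, hfin.diam_lt, fun i j hij _ => hfin.isCastle_closure.disjoint_towers hij,
    fun i => hS' _, fun i => hcard _, hsub⟩

theorem almostFinite_of_mComparison_general [Countable G] [Infinite G] [CompactSpace X]
    [MeasurableSpace X] [BorelSpace X] [ContinuousConstSMul G X] (hG : AmenableGroup G)
    (hfree : FreeAction G X) (hcpt : IsCompact (EG G X)) (hzd : IsTotallyDisconnected (EG G X))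
    (m : ℕ) (hcomp : HasMComparison G X m) : MAlmostFinite G X 0 := by
  refine mAlmostFinite_zero_of_isOpenFolnerCastle fun n hn K δ hδ => ?_
  -- A large `K'` forces the shapes to have at least `n * (m + 1)` elements.
  obtain ⟨K', hKK', hK'⟩ := Infinite.exists_superset_card_eq K (K.card + n * (m + 1)) (by lia)
  obtain ⟨ε, hε, hεδ⟩ := exists_between (lt_min hδ one_pos)
  obtain ⟨hεδ, hε1⟩ := lt_min_iff.1 hεδ
  obtain ⟨ι, _, S, V, hcastle, hμ⟩ := exists_isOpenFolnerCastle_forall_mem_MG hG hfree hcpt hzd K'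
    hε hε1.le (γ := 1 / (2 * (n * (m + 1) : ℕ) + 1)) (by positivity)
  have hcard (i) (hi : (S i).Nonempty) : n * (m + 1) ≤ (S i).card := by
    have := (hcastle.folnerInv i).card_le_card hε1 hi
    lia
  obtain ⟨S', hS', hS'card, hsub⟩ :=
    hcastle.isCastle.exists_subordinateM_zero_of_hasMComparison hcastle.isOpen hcomp hn hcard hμ
  exact ⟨ι, inferInstance, S, S', V, hcastle.mono hKK' hεδ.le, hS', hS'card, hsub⟩

end AlmostFinite

/-- With `E_G(X)` compact and zero-dimensional, dynamical `m`-comparison for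
some `m` implies that the minimal free action is almost finite (i.e. `0`-almost finite). -/
theorem almostFinite_of_mComparison
    {G X : Type*} [Group G] [Countable G] [Infinite G]
    [MetricSpace X] [CompactSpace X] [Infinite X]
    [MeasurableSpace X] [BorelSpace X]
    [MulAction G X] [ContinuousConstSMul G X]
    (hG : AmenableGroup G)
    (hfree : FreeAction G X) (hmin : MinimalAction G X)
    (hcpt : IsCompact (EG G X)) (hzd : IsTotallyDisconnected (EG G X))
    (m : ℕ) (hcomp : HasMComparison G X m) :
    MAlmostFinite G X 0 :=
  almostFinite_of_mComparison_general hG hfree hcpt hzd m hcomp
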